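/- arXiv:1604.01984 — 5 statements merged into one kernel-verified Lean document; each statement's English description precedes it below -/
import Mathlib

section
/- Let (X_1,…,X_r) have the GEV_r density f_r with parameters μ ∈ ℝ, σ > 0, ξ ≠ 0, and r ≥ 2, and set Y = −log σ − (1+ξ Z_r)^{−1/ξ} + (1+ξ Z_{r−1})^{−1/ξ} − (1/ξ + 1) log(1+ξ Z_r). Then E[Y] = −log σ − 1 + (1+ξ)ψ(r). -/
open MeasureTheory ProbabilityTheory Real Filter Topology

/-- The joint density of the `r` largest order statistics limit (GEV_r) with
location `μ`, scale `σ`, and shape `ξ ≠ 0`.  The coordinates are in decreasing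
order: `x 0` is `x_1` (the largest) and `x ⟨r-1,_⟩` is `x_r`. -/
noncomputable def gevrDensity (μ σ ξ : ℝ) (r : ℕ) (x : Fin r → ℝ) : ℝ :=
  if h : 0 < r ∧ StrictAnti x ∧ (∀ j, 0 < 1 + ξ * ((x j - μ) / σ)) then
    (σ ^ r)⁻¹ * Real.exp
      (-(1 + ξ * ((x ⟨r - 1, Nat.sub_lt h.1 Nat.one_pos⟩ - μ) / σ)) ^ (-1 / ξ)
        - (1 / ξ + 1) * ∑ j, Real.log (1 + ξ * ((x j - μ) / σ)))
  else 0

/-- The GEV_r probability measure on `ℝ^r`, given by the density `gevrDensity`. -/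
noncomputable def gevrMeasure (μ σ ξ : ℝ) (r : ℕ) : Measure (Fin r → ℝ) :=
  MeasureTheory.volume.withDensity fun x => ENNReal.ofReal (gevrDensity μ σ ξ r x)

/-- The digamma function `ψ(x) = Γ'(x)/Γ(x)`. -/
noncomputable def digamma (x : ℝ) : ℝ := deriv Real.Gamma x / Real.Gamma x

namespace GevAux
open Set

/-- The gamma law with integer shape `n + 1`. -/
noncomputable def gam (n : ℕ) : Measure ℝ :=
  (volume.restrict (Ioi 0)).withDensity (fun v => ENNReal.ofReal (v ^ n / n.factorial * Real.exp (-v)))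

lemma gam_log_aux (s : ℝ) (hs : 0 < s) :
    IntegrableOn (fun t : ℝ => t ^ (s - 1) * (Real.log t * Real.exp (-t))) (Ioi 0) ∧
    HasDerivAt Real.Gamma (∫ t : ℝ in Ioi 0, t ^ (s - 1) * (Real.log t * Real.exp (-t))) s := by
  have hs' : (0:ℝ) < (s : ℂ).re := by simpa using hs
  have key : ∀ t ∈ Ioi (0:ℝ), (t : ℂ) ^ ((s : ℂ) - 1) * (Real.log t * Real.exp (-t) : ℂ)
      = ((t ^ (s - 1) * (Real.log t * Real.exp (-t)) : ℝ) : ℂ) := by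
    intro t ht
    have := Complex.ofReal_cpow (le_of_lt ht) (s - 1)
    push_cast at this ⊢
    rw [this]
  constructor
  · have h := (mellin_hasDerivAt_of_isBigO_rpow (E := ℂ) (a := s + 1) (b := 0) (s := s)
      (f := fun x => ((Real.exp (-x) : ℝ) : ℂ)) ?_ ?_ (by simp) ?_ hs').1
    · rw [MellinConvergent] at h
      have h2 := h.re
      refine h2.congr ?_
      refine (ae_restrict_iff' measurableSet_Ioi).2 (ae_of_all _ fun t ht => ?_)
      have := key t ht
      simp only [Complex.real_smul, smul_eq_mul]
      rw [this]; exact Complex.ofReal_re _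
    · refine (Continuous.continuousOn ?_).locallyIntegrableOn measurableSet_Ioi
      exact Complex.continuous_ofReal.comp (Real.continuous_exp.comp continuous_neg)
    · rw [← Asymptotics.isBigO_norm_left]
      simp_rw [Complex.norm_real, Asymptotics.isBigO_norm_left]
      simpa only [neg_one_mul] using (isLittleO_exp_neg_mul_rpow_atTop zero_lt_one _).isBigO
    · simp_rw [neg_zero, rpow_zero]
      refine Asymptotics.isBigO_const_of_tendsto (?_ : Tendsto _ _ (𝓝 (1 : ℂ))) one_ne_zero
      rw [(by simp : (1 : ℂ) = Real.exp (-0))]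
      exact (Complex.continuous_ofReal.comp (Real.continuous_exp.comp continuous_neg)).continuousWithinAt
  · have h := (Complex.hasDerivAt_GammaIntegral hs').real_of_complex
    rw [setIntegral_congr_fun measurableSet_Ioi key, integral_complex_ofReal, Complex.ofReal_re] at h
    refine h.congr_of_eventuallyEq ?_
    filter_upwards [lt_mem_nhds hs] with x hx
    rw [← Complex.Gamma_eq_integral (by simpa using hx), Complex.Gamma_ofReal, Complex.ofReal_re]

lemma gam_integral (n : ℕ) (f : ℝ → ℝ) :
    ∫ v, f v ∂(gam n) = ∫ v in Ioi 0, (v ^ n / n.factorial * Real.exp (-v)) * f v := by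
  rw [gam, integral_withDensity_eq_integral_toReal_smul (by fun_prop) (by simp)]
  refine setIntegral_congr_fun measurableSet_Ioi fun v hv => ?_
  have : (0:ℝ) < v := hv
  simp only [smul_eq_mul]
  rw [ENNReal.toReal_ofReal (by positivity)]

lemma gam_integrable (n : ℕ) (f : ℝ → ℝ) :
    Integrable f (gam n) ↔
      IntegrableOn (fun v => (v ^ n / n.factorial * Real.exp (-v)) * f v) (Ioi 0) := by
  rw [gam, integrable_withDensity_iff_integrable_smul' (by fun_prop) (by simp)]
  refine integrable_congr ?_
  refine (ae_restrict_iff' measurableSet_Ioi).2 (ae_of_all _ fun t ht => ?_)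
  have : (0:ℝ) < t := ht
  simp only [smul_eq_mul]
  rw [ENNReal.toReal_ofReal (by positivity)]

lemma gam_pow (n k : ℕ) : Integrable (fun v => v ^ k) (gam n) ∧
    ∫ v, v ^ k ∂(gam n) = (n + k).factorial / n.factorial := by
  have e : ∀ v ∈ Ioi (0:ℝ), (v ^ n / n.factorial * Real.exp (-v)) * v ^ k
      = (n.factorial : ℝ)⁻¹ * (Real.exp (-v) * v ^ (((n + k : ℕ) + 1 : ℝ) - 1)) := by
    intro v hv
    rw [add_sub_cancel_right, Real.rpow_natCast, pow_add]; ring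
  have hc := Real.GammaIntegral_convergent (s := ((n + k : ℕ) + 1 : ℝ)) (by positivity)
  constructor
  · rw [gam_integrable]
    exact IntegrableOn.congr_fun (hc.const_mul _) (fun v hv => (e v hv).symm) measurableSet_Ioi
  · rw [gam_integral, setIntegral_congr_fun measurableSet_Ioi e, integral_const_mul,
      ← Real.Gamma_eq_integral (by positivity), Real.Gamma_nat_eq_factorial]
    ring

lemma gam_log (n : ℕ) : Integrable Real.log (gam n) ∧
    ∫ v, Real.log v ∂(gam n) = deriv Real.Gamma ((n + 1 : ℕ) : ℝ) / Real.Gamma ((n + 1 : ℕ) : ℝ) := by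
  have e : ∀ v ∈ Ioi (0:ℝ), (v ^ n / n.factorial * Real.exp (-v)) * Real.log v
      = (n.factorial : ℝ)⁻¹ * (v ^ (((n + 1 : ℕ) : ℝ) - 1) * (Real.log v * Real.exp (-v))) := by
    intro v hv
    push_cast
    rw [add_sub_cancel_right, Real.rpow_natCast]; ring
  obtain ⟨h1, h2⟩ := gam_log_aux ((n + 1 : ℕ) : ℝ) (by positivity)
  constructor
  · rw [gam_integrable]
    exact IntegrableOn.congr_fun (h1.const_mul _) (fun v hv => (e v hv).symm) measurableSet_Ioi
  · rw [gam_integral, setIntegral_congr_fun measurableSet_Ioi e, integral_const_mul, h2.deriv]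
    push_cast
    rw [Real.Gamma_nat_eq_factorial]
    ring

lemma strictAnti_snoc_iff {n : ℕ} (x : Fin (n + 2) → ℝ) :
    StrictAnti x ↔ StrictAnti (fun i : Fin (n + 1) => x i.castSucc) ∧
      x (Fin.last (n + 1)) < x (Fin.last n).castSucc := by
  rw [Fin.strictAnti_iff_succ_lt, Fin.strictAnti_iff_succ_lt, Fin.forall_fin_succ']
  simp

open Classical in
/-- The unnormalised ordered product weight. -/
noncomputable def D (h : ℝ → ENNReal) {n : ℕ} (x : Fin n → ℝ) : ENNReal :=
  if StrictAnti x then ∏ j, h (x j) else 0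

lemma measurable_D {h : ℝ → ENNReal} (hh : Measurable h) (n : ℕ) :
    Measurable (D h : (Fin n → ℝ) → ENNReal) := by
  unfold D
  refine Measurable.ite ?_ (by fun_prop) measurable_const
  simp only [StrictAnti]
  have : {x : Fin n → ℝ | ∀ ⦃a b : Fin n⦄, a < b → x b < x a}
      = ⋂ a, ⋂ b, ⋂ (_ : a < b), {x | x b < x a} := by ext; simp
  rw [this]
  refine MeasurableSet.iInter fun a => MeasurableSet.iInter fun b => MeasurableSet.iInter fun _ => ?_
  exact measurableSet_lt (measurable_pi_apply _) (measurable_pi_apply _)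

lemma D_snoc (h : ℝ → ENNReal) {n : ℕ} (x : Fin (n + 2) → ℝ) :
    D h x = D h (fun i : Fin (n + 1) => x i.castSucc) *
      (h (x (Fin.last (n + 1))) * if x (Fin.last (n + 1)) < x (Fin.last n).castSucc then 1 else 0) := by
  have hs := strictAnti_snoc_iff x
  unfold D
  rw [Fin.prod_univ_castSucc]
  by_cases h1 : StrictAnti (fun i : Fin (n + 1) => x i.castSucc) <;>
    by_cases h2 : x (Fin.last (n + 1)) < x (Fin.last n).castSucc <;>
    (simp only [h1, h2, and_true, and_false, iff_true, iff_false] at hs; simp [hs, h1, h2])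

/-- Properties of the one-dimensional weight `h` and of the transform `T`. -/
structure Good (h : ℝ → ENNReal) (T : ℝ → ℝ) : Prop where
  mh : Measurable h
  mT : Measurable T
  cv : ∀ K : ℝ → ENNReal, Measurable K → ∫⁻ y, h y * K (T y) = ∫⁻ u in Ioi 0, K u
  pos : ∀ y, h y ≠ 0 → 0 < T y
  mono : ∀ x y, h x ≠ 0 → h y ≠ 0 → (x < y ↔ T y < T x)

lemma lint_snoc (h : ℝ → ENNReal) (hm : Measurable h) (n : ℕ) (G : ℝ → ℝ → ENNReal)
    (hG : Measurable (Function.uncurry G)) :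
    ∫⁻ x : Fin (n + 2) → ℝ, D h x * G (x (Fin.last n).castSucc) (x (Fin.last (n + 1))) =
    ∫⁻ v, ∫⁻ w : Fin (n + 1) → ℝ,
      D h w * (h v * if v < w (Fin.last n) then G (w (Fin.last n)) v else 0) := by
  have hp := (volume_preserving_piFinSuccAbove (fun _ : Fin (n + 2) => ℝ) (Fin.last (n + 1))).symm
  have hD := measurable_D hm (n + 2)
  have hG' : ∀ {β : Type} [MeasurableSpace β] (a b : β → ℝ), Measurable a → Measurable b →
    Measurable (fun x => G (a x) (b x)) := fun a b ha hb => hG.comp (ha.prodMk hb)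
  have hF : Measurable fun x : Fin (n + 2) → ℝ =>
      D h x * G (x (Fin.last n).castSucc) (x (Fin.last (n + 1))) :=
    hD.mul (hG' _ _ (by fun_prop) (by fun_prop))
  rw [← hp.lintegral_comp hF, Measure.volume_eq_prod]
  refine (lintegral_prod _ (hF.comp hp.measurable).aemeasurable).trans ?_
  refine lintegral_congr fun v => lintegral_congr fun w => ?_
  have e1 : ((MeasurableEquiv.piFinSuccAbove (fun _ : Fin (n + 2) => ℝ) (Fin.last (n + 1))).symm (v, w))
      (Fin.last (n + 1)) = v := by
    simp [MeasurableEquiv.piFinSuccAbove]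
  have e2 : ∀ i : Fin (n + 1),
      ((MeasurableEquiv.piFinSuccAbove (fun _ : Fin (n + 2) => ℝ) (Fin.last (n + 1))).symm (v, w))
      i.castSucc = w i := by
    intro i
    simp [MeasurableEquiv.piFinSuccAbove]
  rw [Function.comp_apply, D_snoc, e1]
  simp only [e2]
  split_ifs <;> simp [mul_assoc]


lemma lint_step {h : ℝ → ENNReal} {T : ℝ → ℝ} (g : Good h T) (n : ℕ)
    (hA : ∀ G : ℝ → ENNReal, Measurable G → ∫⁻ x : Fin (n + 1) → ℝ, D h x * G (x (Fin.last n)) =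
      ∫⁻ u, h u * (ENNReal.ofReal (T u ^ n / n.factorial) * G u))
    (G : ℝ → ℝ → ENNReal) (hG : Measurable (Function.uncurry G)) :
    ∫⁻ x : Fin (n + 2) → ℝ, D h x * G (x (Fin.last n).castSucc) (x (Fin.last (n + 1))) =
    ∫⁻ v, ∫⁻ u, h u * (ENNReal.ofReal (T u ^ n / n.factorial) *
      (h v * if v < u then G u v else 0)) := by
  rw [lint_snoc h g.mh n G hG]
  refine lintegral_congr fun v => ?_
  refine hA (fun u => h v * if v < u then G u v else 0) ?_
  refine Measurable.const_mul (Measurable.ite measurableSet_Ioi ?_ measurable_const) _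
  exact hG.comp (measurable_id.prodMk measurable_const)

lemma inner1 {h : ℝ → ENNReal} {T : ℝ → ℝ} (g : Good h T) (n : ℕ) (v : ℝ) (hv : h v ≠ 0) :
    ∫⁻ u, h u * (ENNReal.ofReal (T u ^ n / n.factorial) * if v < u then 1 else 0) =
      ENNReal.ofReal (T v ^ (n + 1) / (n + 1).factorial) := by
  have hT := g.pos v hv
  have hK : Measurable ((Iio (T v)).indicator fun t : ℝ => ENNReal.ofReal (t ^ n / n.factorial)) :=
    Measurable.indicator (by fun_prop) measurableSet_Iio
  have e : ∀ u, h u * (ENNReal.ofReal (T u ^ n / n.factorial) * if v < u then 1 else 0) =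
      h u * ((Iio (T v)).indicator fun t : ℝ => ENNReal.ofReal (t ^ n / n.factorial)) (T u) := by
    intro u
    by_cases hu : h u = 0
    · simp [hu]
    · have := g.mono v u hv hu
      by_cases hvu : v < u
      · simp [hvu, this.1 hvu]
      · simp [hvu, mt this.2 hvu]
  simp_rw [e]
  rw [g.cv _ hK, lintegral_indicator measurableSet_Iio, Measure.restrict_restrict measurableSet_Iio,
    Iio_inter_Ioi, ← ofReal_integral_eq_lintegral_ofReal]
  · congr 1
    rw [← integral_Ioc_eq_integral_Ioo, ← intervalIntegral.integral_of_le hT.le,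
      intervalIntegral.integral_div, integral_pow, Nat.factorial_succ]
    push_cast
    field_simp
    simp
  · have : Continuous fun t : ℝ => t ^ n / n.factorial := by fun_prop
    exact (this.integrableOn_Icc).mono_set Ioo_subset_Icc_self
  · refine (ae_restrict_iff' measurableSet_Ioo).2 (ae_of_all _ fun t ht => ?_)
    have : 0 < t := ht.1
    simp only [Pi.zero_apply]
    positivity

lemma inner2 {h : ℝ → ENNReal} {T : ℝ → ℝ} (g : Good h T) (u : ℝ) (hu : h u ≠ 0) :
    ∫⁻ v, h v * (if v < u then ENNReal.ofReal (Real.exp (-T v)) else 0) =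
      ENNReal.ofReal (Real.exp (-T u)) := by
  have hT := g.pos u hu
  have hK : Measurable ((Ioi (T u)).indicator fun t : ℝ => ENNReal.ofReal (Real.exp (-t))) :=
    Measurable.indicator (by fun_prop) measurableSet_Ioi
  have e : ∀ v, h v * (if v < u then ENNReal.ofReal (Real.exp (-T v)) else 0) =
      h v * ((Ioi (T u)).indicator fun t : ℝ => ENNReal.ofReal (Real.exp (-t))) (T v) := by
    intro v
    by_cases hv : h v = 0
    · simp [hv]
    · have := g.mono v u hv hu
      by_cases hvu : v < u
      · simp [hvu, this.1 hvu]
      · simp [hvu, mt this.2 hvu]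
  simp_rw [e]
  rw [g.cv _ hK, lintegral_indicator measurableSet_Ioi, Measure.restrict_restrict measurableSet_Ioi,
    Ioi_inter_Ioi, ← ofReal_integral_eq_lintegral_ofReal]
  · rw [sup_eq_left.2 hT.le, integral_exp_neg_Ioi]
  · exact integrableOn_exp_neg_Ioi _
  · exact ae_of_all _ fun t => (Real.exp_pos _).le

lemma lint_last {h : ℝ → ENNReal} {T : ℝ → ℝ} (g : Good h T) (n : ℕ) :
    ∀ G : ℝ → ENNReal, Measurable G → ∫⁻ x : Fin (n + 1) → ℝ, D h x * G (x (Fin.last n)) =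
      ∫⁻ u, h u * (ENNReal.ofReal (T u ^ n / n.factorial) * G u) := by
  induction n with
  | zero =>
    intro G hG
    have hp := volume_preserving_funUnique (Fin 1) ℝ
    have := hp.lintegral_comp (f := fun u => h u * (ENNReal.ofReal (T u ^ 0 / (0).factorial) * G u))
      (by have := g.mh; have := g.mT; fun_prop)
    rw [← this]
    refine lintegral_congr fun x => ?_
    have hx : StrictAnti x := by
      intro a b hab; exact absurd hab (by omega)
    simp [D, hx]
  | succ n ih =>
    intro G hG
    have := lint_step g n ih (fun _ v => G v) (hG.comp measurable_snd)
    refine this.trans (lintegral_congr fun v => ?_)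
    have hm := g.mh
    have hT := g.mT
    by_cases hv : h v = 0
    · simp [hv]
    · have e : ∀ u, h u * (ENNReal.ofReal (T u ^ n / n.factorial) * (h v * if v < u then G v else 0))
        = (h v * G v) * (h u * (ENNReal.ofReal (T u ^ n / n.factorial) * if v < u then 1 else 0)) := by
        intro u
        split_ifs
        · ring
        · simp
      simp_rw [e]
      rw [lintegral_const_mul, inner1 g n v hv]
      · ring
      · refine hm.mul (Measurable.mul (by fun_prop) ?_)
        exact Measurable.ite measurableSet_Ioi measurable_const measurable_const

lemma map_last {h : ℝ → ENNReal} {T : ℝ → ℝ} (g : Good h T) (n : ℕ) :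
    (volume.withDensity fun x : Fin (n + 2) → ℝ =>
      D h x * ENNReal.ofReal (Real.exp (-T (x (Fin.last (n + 1)))))).map
      (fun x => T (x (Fin.last (n + 1)))) = gam (n + 1) := by
  have hT := g.mT
  have hD := measurable_D g.mh (n + 2)
  refine Measure.ext_of_lintegral _ fun H hH => ?_
  rw [lintegral_map hH (by fun_prop), lintegral_withDensity_eq_lintegral_mul _ (by fun_prop)
    (by fun_prop), gam, lintegral_withDensity_eq_lintegral_mul _ (by fun_prop) hH]
  simp only [Pi.mul_apply, mul_assoc]
  rw [lint_last g (n + 1) (fun u => ENNReal.ofReal (Real.exp (-T u)) * H (T u)) (by fun_prop)]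
  rw [g.cv (fun u => ENNReal.ofReal (u ^ (n + 1) / (n + 1).factorial) *
    (ENNReal.ofReal (Real.exp (-u)) * H u)) (by fun_prop)]
  refine setLIntegral_congr_fun measurableSet_Ioi fun u hu => ?_
  have : (0:ℝ) < u := hu
  rw [ENNReal.ofReal_mul (by positivity), mul_assoc]

lemma map_prev {h : ℝ → ENNReal} {T : ℝ → ℝ} (g : Good h T) (n : ℕ) :
    (volume.withDensity fun x : Fin (n + 2) → ℝ =>
      D h x * ENNReal.ofReal (Real.exp (-T (x (Fin.last (n + 1)))))).map
      (fun x => T (x (Fin.last n).castSucc)) = gam n := by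
  have hT := g.mT
  have hm := g.mh
  have hD := measurable_D g.mh (n + 2)
  refine Measure.ext_of_lintegral _ fun H hH => ?_
  rw [lintegral_map hH (by fun_prop), lintegral_withDensity_eq_lintegral_mul _ (by fun_prop)
    (by fun_prop), gam, lintegral_withDensity_eq_lintegral_mul _ (by fun_prop) hH]
  simp only [Pi.mul_apply, mul_assoc]
  have hG : Measurable (Function.uncurry
    (fun u v : ℝ => ENNReal.ofReal (Real.exp (-T v)) * H (T u))) := by
    unfold Function.uncurry; fun_prop
  rw [lint_step g n (lint_last g n)
    (fun u v => ENNReal.ofReal (Real.exp (-T v)) * H (T u)) hG]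
  have hlt : MeasurableSet {p : ℝ × ℝ | p.1 < p.2} := measurableSet_lt measurable_fst measurable_snd
  rw [lintegral_lintegral_swap]
  · have e2 : ∀ u, (∫⁻ v, h u * (ENNReal.ofReal (T u ^ n / n.factorial) *
      (h v * if v < u then ENNReal.ofReal (Real.exp (-T v)) * H (T u) else 0)))
      = h u * (ENNReal.ofReal (T u ^ n / n.factorial) *
        (ENNReal.ofReal (Real.exp (-T u)) * H (T u))) := by
      intro u
      by_cases hu : h u = 0
      · simp [hu]
      have e : ∀ v, h u * (ENNReal.ofReal (T u ^ n / n.factorial) *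
        (h v * if v < u then ENNReal.ofReal (Real.exp (-T v)) * H (T u) else 0))
        = (h u * (ENNReal.ofReal (T u ^ n / n.factorial) * H (T u))) *
          (h v * if v < u then ENNReal.ofReal (Real.exp (-T v)) else 0) := by
        intro v
        split_ifs
        · ring
        · simp
      simp_rw [e]
      rw [lintegral_const_mul, inner2 g u hu]
      · ring
      · refine hm.mul (Measurable.ite measurableSet_Iio (by fun_prop) measurable_const)
    simp_rw [e2]
    rw [g.cv (fun u => ENNReal.ofReal (u ^ n / n.factorial) *
      (ENNReal.ofReal (Real.exp (-u)) * H u)) (by fun_prop)]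
    refine setLIntegral_congr_fun measurableSet_Ioi fun u hu => ?_
    have : (0:ℝ) < u := hu
    rw [ENNReal.ofReal_mul (by positivity), mul_assoc]
  · unfold Function.uncurry
    refine Measurable.aemeasurable ?_
    refine Measurable.mul (by fun_prop) (Measurable.mul (by fun_prop) (Measurable.mul (by fun_prop) ?_))
    exact Measurable.ite hlt (by fun_prop) measurable_const

/-- one-dimensional weight -/
noncomputable def wt (μ σ ξ : ℝ) (x : ℝ) : ENNReal :=
  if 0 < 1 + ξ * ((x - μ) / σ) then
    ENNReal.ofReal (σ⁻¹ * (1 + ξ * ((x - μ) / σ)) ^ (-(1 / ξ + 1))) else 0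

/-- the transform to the exponential scale -/
noncomputable def tr (μ σ ξ : ℝ) (x : ℝ) : ℝ := (1 + ξ * ((x - μ) / σ)) ^ (-1 / ξ)

lemma wt_ne {μ σ ξ x : ℝ} (h : wt μ σ ξ x ≠ 0) : 0 < 1 + ξ * ((x - μ) / σ) := by
  by_contra hh
  exact h (if_neg hh)

lemma tr_mono (μ σ ξ : ℝ) (hσ : 0 < σ) (hξ : ξ ≠ 0) (x y : ℝ) (hx : 0 < 1 + ξ * ((x - μ) / σ))
    (hy : 0 < 1 + ξ * ((y - μ) / σ)) (hxy : x < y) : tr μ σ ξ y < tr μ σ ξ x := by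
  have hz : (x - μ) / σ < (y - μ) / σ := by gcongr
  unfold tr
  rcases lt_or_gt_of_ne hξ with h | h
  · refine Real.rpow_lt_rpow hy.le ?_ (div_pos_of_neg_of_neg (by norm_num) h)
    nlinarith
  · refine Real.rpow_lt_rpow_of_neg hx ?_ (div_neg_of_neg_of_pos (by norm_num) h)
    nlinarith

lemma good (μ σ ξ : ℝ) (hσ : 0 < σ) (hξ : ξ ≠ 0) : Good (wt μ σ ξ) (tr μ σ ξ) where
  mh := by
    unfold wt
    exact Measurable.ite (measurableSet_lt (by fun_prop) (by fun_prop)) (by fun_prop) measurable_const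
  mT := by unfold tr; fun_prop
  pos := fun y hy => Real.rpow_pos_of_pos (wt_ne hy) _
  mono := fun x y hx hy => by
    have hx := wt_ne hx
    have hy := wt_ne hy
    constructor
    · exact tr_mono μ σ ξ hσ hξ x y hx hy
    · intro h
      by_contra hc
      rcases (not_lt.1 hc).lt_or_eq with h1 | h1
      · exact lt_asymm h (tr_mono μ σ ξ hσ hξ y x hy hx h1)
      · subst h1; exact lt_irrefl _ h
  cv := fun K hK => by
    set S : Set ℝ := {x | 0 < 1 + ξ * ((x - μ) / σ)} with hS
    have mS : MeasurableSet S := measurableSet_lt (by fun_prop) (by fun_prop)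
    have hinj : InjOn (tr μ σ ξ) S := by
      intro x hx y hy hxy
      rcases lt_trichotomy x y with h | h | h
      · exact absurd hxy (tr_mono μ σ ξ hσ hξ x y hx hy h).ne'
      · exact h
      · exact absurd hxy (tr_mono μ σ ξ hσ hξ y x hy hx h).ne
    have him : tr μ σ ξ '' S = Ioi 0 := by
      ext w
      constructor
      · rintro ⟨x, hx, rfl⟩
        exact Real.rpow_pos_of_pos hx _
      · intro hw
        have hw : 0 < w := hw
        have e : 1 + ξ * ((μ + σ * ((w ^ (-ξ) - 1) / ξ) - μ) / σ) = w ^ (-ξ) := by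
          field_simp; ring
        refine ⟨μ + σ * ((w ^ (-ξ) - 1) / ξ), ?_, ?_⟩
        · simp only [hS, mem_ofPred_eq, e]; positivity
        · unfold tr
          rw [e, ← Real.rpow_mul hw.le]
          have : -ξ * (-1 / ξ) = 1 := by field_simp
          rw [this, Real.rpow_one]
    have hder : ∀ x ∈ S, HasDerivWithinAt (tr μ σ ξ)
        (-(σ⁻¹ * (1 + ξ * ((x - μ) / σ)) ^ (-(1 / ξ + 1)))) S x := by
      intro x hx
      have h1 : HasDerivAt (fun x : ℝ => 1 + ξ * ((x - μ) / σ)) (ξ * (1 / σ)) x :=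
        ((((hasDerivAt_id x).sub_const μ).div_const σ).const_mul ξ).const_add 1
      have h2 := h1.rpow_const (p := -1 / ξ) (Or.inl (ne_of_gt hx))
      refine (h2.congr_deriv ?_).hasDerivWithinAt
      have : -1 / ξ - 1 = -(1 / ξ + 1) := by ring
      rw [this]
      field_simp
    rw [← him, lintegral_image_eq_lintegral_abs_deriv_mul mS hder hinj,
      ← lintegral_indicator mS]
    refine lintegral_congr fun x => ?_
    by_cases hx : x ∈ S
    · have hx' : 0 < 1 + ξ * ((x - μ) / σ) := hx
      rw [indicator_of_mem hx, wt, if_pos hx', abs_neg, abs_of_pos (by positivity)]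
    · have hx' : ¬ 0 < 1 + ξ * ((x - μ) / σ) := hx
      rw [indicator_of_notMem hx, wt, if_neg hx', zero_mul]


lemma density_eq (μ σ ξ : ℝ) (hσ : 0 < σ) (n : ℕ) (x : Fin (n + 2) → ℝ) :
    ENNReal.ofReal (gevrDensity μ σ ξ (n + 2) x) =
      D (wt μ σ ξ) x * ENNReal.ofReal (Real.exp (-tr μ σ ξ (x (Fin.last (n + 1))))) := by
  unfold gevrDensity D
  by_cases h1 : StrictAnti x
  · by_cases h2 : ∀ j, 0 < 1 + ξ * ((x j - μ) / σ)
    · rw [dif_pos ⟨by omega, h1, h2⟩, if_pos h1]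
      have e : ∏ j, wt μ σ ξ (x j) = ENNReal.ofReal ((σ ^ (n + 2))⁻¹ *
          Real.exp (-((1 / ξ + 1) * ∑ j, Real.log (1 + ξ * ((x j - μ) / σ))))) := by
        have : ∀ j, wt μ σ ξ (x j) = ENNReal.ofReal
            (σ⁻¹ * Real.exp (-((1 / ξ + 1) * Real.log (1 + ξ * ((x j - μ) / σ))))) := by
          intro j
          rw [wt, if_pos (h2 j), Real.rpow_def_of_pos (h2 j)]
          congr 3
          ring
        simp_rw [this]
        rw [← ENNReal.ofReal_prod_of_nonneg (fun j _ => by positivity), Finset.prod_mul_distrib,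
          ← Real.exp_sum, Finset.sum_neg_distrib, ← Finset.mul_sum]
        simp
      rw [e, ← ENNReal.ofReal_mul (by positivity), mul_assoc, ← Real.exp_add]
      congr 3
      rw [sub_eq_add_neg, add_comm]
      rfl
    · rw [dif_neg (fun h => h2 h.2.2), if_pos h1]
      push Not at h2
      obtain ⟨j, hj⟩ := h2
      have : wt μ σ ξ (x j) = 0 := if_neg (not_lt.2 hj)
      rw [Finset.prod_eq_zero (Finset.mem_univ j) this]
      simp
  · rw [dif_neg (fun h => h1 h.2.1), if_neg h1]
    simp


end GevAux


/-- the mean of the entropy difference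
`Y = −log σ − (1+ξZ_r)^{−1/ξ} + (1+ξZ_{r−1})^{−1/ξ} − (1/ξ+1) log(1+ξZ_r)`
under the GEV_r distribution is `−log σ − 1 + (1+ξ)ψ(r)`. -/
theorem entropy_difference_mean
    (μ σ ξ : ℝ) (hσ : 0 < σ) (hξ : ξ ≠ 0) (r : ℕ) (hr : 2 ≤ r) :
    ∫ x : Fin r → ℝ,
        (-Real.log σ
          - (1 + ξ * ((x ⟨r - 1, by omega⟩ - μ) / σ)) ^ (-1 / ξ)
          + (1 + ξ * ((x ⟨r - 2, by omega⟩ - μ) / σ)) ^ (-1 / ξ)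
          - (1 / ξ + 1) * Real.log (1 + ξ * ((x ⟨r - 1, by omega⟩ - μ) / σ)))
        ∂(gevrMeasure μ σ ξ r)
      = -Real.log σ - 1 + (1 + ξ) * digamma r := by
  obtain ⟨n, rfl⟩ : ∃ n, r = n + 2 := ⟨r - 2, by omega⟩
  have g := GevAux.good μ σ ξ hσ hξ
  have hP : gevrMeasure μ σ ξ (n + 2) = (volume.withDensity fun x : Fin (n + 2) → ℝ =>
      GevAux.D (GevAux.wt μ σ ξ) x *
        ENNReal.ofReal (Real.exp (-GevAux.tr μ σ ξ (x (Fin.last (n + 1)))))) := by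
    unfold gevrMeasure
    congr 1
    funext x
    exact GevAux.density_eq μ σ ξ hσ n x
  have m1 := GevAux.map_last g n
  have m2 := GevAux.map_prev g n
  rw [← hP] at m1 m2
  set P := gevrMeasure μ σ ξ (n + 2) with hPdef
  have hT := g.mT
  have hm := GevAux.measurable_D g.mh (n + 2)
  set a : (Fin (n + 2) → ℝ) → ℝ := fun x => GevAux.tr μ σ ξ (x (Fin.last (n + 1))) with ha
  set b : (Fin (n + 2) → ℝ) → ℝ := fun x => GevAux.tr μ σ ξ (x (Fin.last n).castSucc) with hb
  have mea : Measurable a := by fun_prop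
  have meb : Measurable b := by fun_prop
  have push1 : ∀ f : ℝ → ℝ, Measurable f → Integrable f (GevAux.gam (n + 1)) →
      Integrable (fun x => f (a x)) P ∧ ∫ x, f (a x) ∂P = ∫ v, f v ∂(GevAux.gam (n + 1)) := by
    intro f hf hi
    rw [← m1] at hi ⊢
    exact ⟨hi.comp_measurable mea, (integral_map mea.aemeasurable hf.aestronglyMeasurable).symm⟩
  have push2 : ∀ f : ℝ → ℝ, Measurable f → Integrable f (GevAux.gam n) →
      Integrable (fun x => f (b x)) P ∧ ∫ x, f (b x) ∂P = ∫ v, f v ∂(GevAux.gam n) := by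
    intro f hf hi
    rw [← m2] at hi ⊢
    exact ⟨hi.comp_measurable meb, (integral_map meb.aemeasurable hf.aestronglyMeasurable).symm⟩
  obtain ⟨i0, v0⟩ := push1 _ (by fun_prop) (GevAux.gam_pow (n + 1) 0).1
  obtain ⟨i1, v1⟩ := push1 _ (by fun_prop) (GevAux.gam_pow (n + 1) 1).1
  obtain ⟨i2, v2⟩ := push2 _ (by fun_prop) (GevAux.gam_pow n 1).1
  obtain ⟨i3, v3⟩ := push1 _ Real.measurable_log (GevAux.gam_log (n + 1)).1
  rw [(GevAux.gam_pow (n + 1) 0).2] at v0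
  rw [(GevAux.gam_pow (n + 1) 1).2] at v1
  rw [(GevAux.gam_pow n 1).2] at v2
  rw [(GevAux.gam_log (n + 1)).2] at v3
  have hY : ∀ᵐ x ∂P, (-Real.log σ
          - (1 + ξ * ((x ⟨n + 2 - 1, by omega⟩ - μ) / σ)) ^ (-1 / ξ)
          + (1 + ξ * ((x ⟨n + 2 - 2, by omega⟩ - μ) / σ)) ^ (-1 / ξ)
          - (1 / ξ + 1) * Real.log (1 + ξ * ((x ⟨n + 2 - 1, by omega⟩ - μ) / σ)))
      = -Real.log σ * a x ^ 0 - a x ^ 1 + b x ^ 1 + (1 + ξ) * Real.log (a x) := by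
    rw [hP, ae_withDensity_iff (by fun_prop)]
    refine ae_of_all _ fun x hx => ?_
    have h1 : 0 < 1 + ξ * ((x (Fin.last (n + 1)) - μ) / σ) := by
      apply GevAux.wt_ne
      intro h0
      apply hx
      have : GevAux.D (GevAux.wt μ σ ξ) x = 0 := by
        unfold GevAux.D
        rw [Finset.prod_eq_zero (Finset.mem_univ (Fin.last (n + 1))) h0]
        simp
      rw [this, zero_mul]
    have hl : Real.log (a x) = -1 / ξ * Real.log (1 + ξ * ((x (Fin.last (n + 1)) - μ) / σ)) :=
      Real.log_rpow h1 _
    rw [hl]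
    have e1 : (1 + ξ * ((x ⟨n + 2 - 1, by omega⟩ - μ) / σ)) ^ (-1 / ξ) = a x := rfl
    have e2 : (1 + ξ * ((x ⟨n + 2 - 2, by omega⟩ - μ) / σ)) ^ (-1 / ξ) = b x := rfl
    have e3 : Real.log (1 + ξ * ((x ⟨n + 2 - 1, by omega⟩ - μ) / σ))
      = Real.log (1 + ξ * ((x (Fin.last (n + 1)) - μ) / σ)) := rfl
    rw [e1, e2, e3]
    field_simp
    ring
  have j1 : Integrable (fun x => -Real.log σ * a x ^ 0 - a x ^ 1) P := (i0.const_mul _).sub i1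
  have j2 : Integrable (fun x => -Real.log σ * a x ^ 0 - a x ^ 1 + b x ^ 1) P := j1.add i2
  rw [integral_congr_ae hY, integral_add j2 (i3.const_mul _),
    integral_add j1 i2, integral_sub (i0.const_mul _) i1,
    integral_const_mul, integral_const_mul, v0, v1, v2, v3]
  have f1 : ((n + 1 + 1).factorial : ℝ) = (n + 2) * (n + 1).factorial := by
    rw [Nat.factorial_succ]; push_cast; ring
  have f2 : ((n + 1).factorial : ℝ) = (n + 1) * n.factorial := by
    rw [Nat.factorial_succ]; push_cast; ring
  have f3 : (n.factorial : ℝ) ≠ 0 := by positivity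
  have f4 : ((n + 1).factorial : ℝ) ≠ 0 := by positivity
  have g0 : ((n + 1 + 0).factorial : ℝ) / (n + 1).factorial = 1 := div_self f4
  have g1 : ((n + 1 + 1).factorial : ℝ) / (n + 1).factorial = n + 2 := by
    rw [f1]; field_simp
  have g2 : ((n + 1).factorial : ℝ) / n.factorial = n + 1 := by
    rw [f2]; field_simp
  rw [g0, g1, g2]
  unfold digamma
  have : n + 1 + 1 = n + 2 := rfl
  rw [this]
  ring
end

section
/- Let (X_1,…,X_r) have the GEV_r density f_r with parameters μ ∈ ℝ, σ > 0, ξ ≠ 0, and r ≥ 2, and set Y = −log σ − (1+ξ Z_r)^{−1/ξ} + (1+ξ Z_{r−1})^{−1/ξ} − (1/ξ + 1) log(1+ξ Z_r). Then E[Y²] < ∞; that is, Y is square-integrable with respect to f_r. -/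
open MeasureTheory ProbabilityTheory Real Filter Topology

/-- the entropy difference
`Y = −log σ − (1+ξZ_r)^{−1/ξ} + (1+ξZ_{r−1})^{−1/ξ} − (1/ξ+1) log(1+ξZ_r)`
is square-integrable under the GEV_r distribution, i.e. `E[Y²] < ∞`. -/
lemma gev_T_anti (μ σ ξ : ℝ) (hσ : 0 < σ) (hξ : ξ ≠ 0) {x y : ℝ} (hxy : x < y)
    (hx : 0 < 1 + ξ * ((x - μ) / σ)) (hy : 0 < 1 + ξ * ((y - μ) / σ)) :
    (1 + ξ * ((y - μ) / σ)) ^ (-1 / ξ) < (1 + ξ * ((x - μ) / σ)) ^ (-1 / ξ) := by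
  have hz : (x - μ) / σ < (y - μ) / σ := by gcongr
  rcases lt_or_gt_of_ne hξ with h | h
  · apply Real.rpow_lt_rpow hy.le
    · nlinarith
    · exact div_pos_of_neg_of_neg (by norm_num) h
  · apply Real.rpow_lt_rpow_of_neg hx
    · nlinarith
    · exact div_neg_of_neg_of_pos (by norm_num) h

lemma gev_bound (L c t s : ℝ) (hs : 0 < s) (hst : s < t) :
    (L - t + s - c * Real.log t) ^ 2 * Real.exp (-t)
      ≤ 3 * (L ^ 2 + 8 * (1 + |c|) ^ 2 + 16 * c ^ 2) *
        ((1 + t ^ (-(1/2) : ℝ)) * Real.exp (-t / 2)) := by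
  have ht : 0 < t := hs.trans hst
  set q := t ^ (-(1/4) : ℝ) with hq
  have hq0 : 0 < q := Real.rpow_pos_of_pos ht _
  have hqq : t ^ (-(1/2) : ℝ) = q ^ 2 := by
    rw [hq, ← Real.rpow_natCast, ← Real.rpow_mul ht.le]; norm_num
  have hl1 : Real.log t ≤ t := (Real.log_le_sub_one_of_pos ht).trans (by linarith)
  have hl2 : -Real.log t ≤ 4 * q := by
    have h1 := Real.log_le_sub_one_of_pos hq0
    rw [hq, Real.log_rpow ht] at h1
    rw [← hq] at h1
    linarith
  have hlog : |Real.log t| ≤ t + 4 * q := abs_le.2 ⟨by linarith, by linarith⟩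
  have habs : |L - t + s - c * Real.log t| ≤ |L| + (1 + |c|) * t + 4 * |c| * q := by
    have h1 : |c * Real.log t| ≤ |c| * (t + 4 * q) := by
      rw [abs_mul]; gcongr
    have h2 := abs_le.1 h1
    have h3 := abs_le.1 (le_refl |L|)
    rw [abs_le]; constructor <;> nlinarith [h2.1, h2.2, h3.1, h3.2]
  have hsq : (L - t + s - c * Real.log t) ^ 2
      ≤ 3 * (L ^ 2 + (1 + |c|) ^ 2 * t ^ 2 + 16 * c ^ 2 * q ^ 2) := by
    rw [← sq_abs, ← sq_abs L, ← sq_abs c]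
    have := pow_le_pow_left₀ (abs_nonneg _) habs 2
    refine this.trans ?_
    nlinarith [sq_nonneg (|L| - (1 + |c|) * t), sq_nonneg (|L| - 4 * |c| * q),
      sq_nonneg ((1 + |c|) * t - 4 * |c| * q)]
  have he : Real.exp (-t) = Real.exp (-t/2) * Real.exp (-t/2) := by
    rw [← Real.exp_add]; ring_nf
  have hE0 : 0 < Real.exp (-t/2) := Real.exp_pos _
  have hE1 : Real.exp (-t/2) ≤ 1 := Real.exp_le_one_iff.2 (by linarith)
  have hE2 : t ^ 2 * Real.exp (-t/2) ≤ 8 := by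
    have h1 := Real.quadratic_le_exp_of_nonneg (x := t / 2) (by linarith)
    have h2 : Real.exp (t/2) * Real.exp (-t/2) = 1 := by
      rw [← Real.exp_add]; ring_nf; simp
    have h3 : t ^ 2 ≤ 8 * Real.exp (t/2) := by nlinarith
    nlinarith
  rw [he, ← mul_assoc, ← mul_assoc, hqq]
  refine mul_le_mul_of_nonneg_right ?_ hE0.le
  refine (mul_le_mul_of_nonneg_right hsq hE0.le).trans ?_
  have a1 : L ^ 2 * Real.exp (-t/2) ≤ L ^ 2 := mul_le_of_le_one_right (sq_nonneg _) hE1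
  have a2 : (1 + |c|) ^ 2 * (t ^ 2 * Real.exp (-t/2)) ≤ (1 + |c|) ^ 2 * 8 := by gcongr
  have a3 : 16 * c ^ 2 * q ^ 2 * Real.exp (-t/2) ≤ 16 * c ^ 2 * q ^ 2 :=
    mul_le_of_le_one_right (by positivity) hE1
  have a4 : 0 ≤ (L ^ 2 + 8 * (1 + |c|) ^ 2) * q ^ 2 := by positivity
  have a5 : 0 ≤ c ^ 2 := sq_nonneg _
  nlinarith

/-- one-dimensional dominating function -/
noncomputable def gevG (μ σ ξ b : ℝ) (x : ℝ) : ℝ :=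
  Set.indicator {x : ℝ | 0 < 1 + ξ * ((x - μ) / σ)} (fun x =>
    (σ⁻¹ * Real.exp (-(1 / ξ + 1) * Real.log (1 + ξ * ((x - μ) / σ)))) *
    ((1 + ((1 + ξ * ((x - μ) / σ)) ^ (-1 / ξ)) ^ (-(1/2) : ℝ)) *
      Real.exp (-b * (1 + ξ * ((x - μ) / σ)) ^ (-1 / ξ)))) x

lemma gevG_integrable (μ σ ξ b : ℝ) (hσ : 0 < σ) (hξ : ξ ≠ 0) (hb : 0 < b) :
    Integrable (gevG μ σ ξ b) := by
  have hS : MeasurableSet {x : ℝ | 0 < 1 + ξ * ((x - μ) / σ)} :=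
    measurableSet_lt (by fun_prop) (by fun_prop)
  unfold gevG
  rw [integrable_indicator_iff hS]
  have hder : ∀ x ∈ {x : ℝ | 0 < 1 + ξ * ((x - μ) / σ)},
      HasDerivWithinAt (fun x => (1 + ξ * ((x - μ) / σ)) ^ (-1 / ξ))
        (-(σ⁻¹ * Real.exp (-(1 / ξ + 1) * Real.log (1 + ξ * ((x - μ) / σ)))))
        {x : ℝ | 0 < 1 + ξ * ((x - μ) / σ)} x := by
    intro x hx
    have hx' : 0 < 1 + ξ * ((x - μ) / σ) := hx
    have h1 : HasDerivAt (fun x => 1 + ξ * ((x - μ) / σ)) (ξ * (1 / σ)) x :=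
      ((((hasDerivAt_id x).sub_const μ).div_const σ).const_mul ξ).const_add 1
    have h2 := h1.rpow_const (p := -1 / ξ) (Or.inl hx'.ne')
    refine (HasDerivAt.congr_deriv h2 ?_).hasDerivWithinAt
    rw [Real.rpow_def_of_pos hx']
    have : Real.log (1 + ξ * ((x - μ) / σ)) * (-1 / ξ - 1)
        = -(1 / ξ + 1) * Real.log (1 + ξ * ((x - μ) / σ)) := by ring
    rw [this]
    field_simp
  have hinj : Set.InjOn (fun x => (1 + ξ * ((x - μ) / σ)) ^ (-1 / ξ))
      {x : ℝ | 0 < 1 + ξ * ((x - μ) / σ)} := by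
    intro x hx y hy h
    rcases lt_trichotomy x y with h1 | h1 | h1
    · exact absurd h (gev_T_anti μ σ ξ hσ hξ h1 hx hy).ne'
    · exact h1
    · exact absurd h (gev_T_anti μ σ ξ hσ hξ h1 hy hx).ne
  have key := integrableOn_image_iff_integrableOn_abs_deriv_smul hS hder hinj
    (fun t : ℝ => (1 + t ^ (-(1/2) : ℝ)) * Real.exp (-b * t))
  have hI : IntegrableOn (fun t : ℝ => (1 + t ^ (-(1/2) : ℝ)) * Real.exp (-b * t)) (Set.Ioi 0) := by
    have i1 := integrableOn_rpow_mul_exp_neg_mul_rpow (p := 1) (s := 0) (by norm_num) one_pos hb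
    have i2 := integrableOn_rpow_mul_exp_neg_mul_rpow (p := 1) (s := -(1/2)) (by norm_num) one_pos hb
    refine (i1.add i2).congr_fun ?_ measurableSet_Ioi
    intro t _
    simp [add_mul]
  have := key.1 (hI.mono_set ?_)
  · refine this.congr_fun ?_ hS
    intro x _
    simp only [smul_eq_mul, abs_neg]
    rw [abs_of_nonneg (by positivity)]
  · rintro _ ⟨x, hx, rfl⟩
    exact Real.rpow_pos_of_pos hx _

lemma gevrDensity_eq (μ σ ξ : ℝ) (r : ℕ) (hr : 0 < r) (x : Fin r → ℝ) :
    gevrDensity μ σ ξ r x =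
      Set.indicator {x : Fin r → ℝ | StrictAnti x ∧ ∀ j, 0 < 1 + ξ * ((x j - μ) / σ)}
      (fun x => (σ ^ r)⁻¹ * Real.exp
      (-(1 + ξ * ((x ⟨r - 1, Nat.sub_lt hr Nat.one_pos⟩ - μ) / σ)) ^ (-1 / ξ)
        - (1 / ξ + 1) * ∑ j, Real.log (1 + ξ * ((x j - μ) / σ)))) x := by
  unfold gevrDensity
  by_cases h : StrictAnti x ∧ ∀ j, 0 < 1 + ξ * ((x j - μ) / σ)
  · rw [dif_pos ⟨hr, h⟩, Set.indicator_of_mem (by exact h)]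
  · rw [dif_neg (fun h' => h h'.2), Set.indicator_of_notMem (by exact h)]

lemma gevrDensity_measurable (μ σ ξ : ℝ) (r : ℕ) (hr : 0 < r) :
    Measurable (gevrDensity μ σ ξ r) := by
  rw [funext (gevrDensity_eq μ σ ξ r hr)]
  refine Measurable.indicator (by fun_prop) ?_
  have : {x : Fin r → ℝ | StrictAnti x ∧ ∀ j, 0 < 1 + ξ * ((x j - μ) / σ)} =
      (⋂ i : Fin r, ⋂ j : Fin r, ⋂ _ : i < j, {x : Fin r → ℝ | x j < x i}) ∩
      ⋂ j, {x : Fin r → ℝ | 0 < 1 + ξ * ((x j - μ) / σ)} := by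
    ext x
    simp [StrictAnti]
  rw [this]
  refine MeasurableSet.inter ?_ ?_
  · refine MeasurableSet.iInter fun i => MeasurableSet.iInter fun j => MeasurableSet.iInter fun _ => ?_
    exact measurableSet_lt (by fun_prop) (by fun_prop)
  · exact MeasurableSet.iInter fun j => measurableSet_lt (by fun_prop) (by fun_prop)

theorem entropy_difference_square_integrable
    (μ σ ξ : ℝ) (hσ : 0 < σ) (hξ : ξ ≠ 0) (r : ℕ) (hr : 2 ≤ r) :
    MeasureTheory.Integrable
      (fun x : Fin r → ℝ =>
        (-Real.log σ
          - (1 + ξ * ((x ⟨r - 1, by omega⟩ - μ) / σ)) ^ (-1 / ξ)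
          + (1 + ξ * ((x ⟨r - 2, by omega⟩ - μ) / σ)) ^ (-1 / ξ)
          - (1 / ξ + 1) * Real.log (1 + ξ * ((x ⟨r - 1, by omega⟩ - μ) / σ))) ^ 2)
      (gevrMeasure μ σ ξ r) := by
  have hr0 : 0 < r := by omega
  have hrR : (0 : ℝ) < r := by exact_mod_cast hr0
  have hmeas := gevrDensity_measurable μ σ ξ r hr0
  unfold gevrMeasure
  rw [integrable_withDensity_iff_integrable_smul' hmeas.ennreal_ofReal
    (Filter.Eventually.of_forall fun x => ENNReal.ofReal_lt_top)]
  have hprod : Integrable (fun x : Fin r → ℝ => ∏ j, gevG μ σ ξ (1 / (2 * r)) (x j)) :=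
    Integrable.fintype_prod (f := fun _ => gevG μ σ ξ (1 / (2 * r)))
      fun _ => gevG_integrable μ σ ξ _ hσ hξ (by positivity)
  refine (hprod.const_mul (3 * ((-Real.log σ) ^ 2 + 8 * (1 + |-(1 + ξ)|) ^ 2
    + 16 * (-(1 + ξ)) ^ 2))).mono' ?_ (Filter.Eventually.of_forall fun x => ?_)
  · apply Measurable.aestronglyMeasurable
    simp only [smul_eq_mul]
    refine Measurable.mul hmeas.ennreal_ofReal.ennreal_toReal ?_
    fun_prop
  have hGnn : ∀ y, 0 ≤ gevG μ σ ξ (1 / (2 * r)) y := by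
    intro y
    refine Set.indicator_nonneg (fun y hy => ?_) y
    have hy' : 0 < 1 + ξ * ((y - μ) / σ) := hy
    positivity
  rw [gevrDensity_eq μ σ ξ r hr0]
  by_cases h : StrictAnti x ∧ ∀ j, 0 < 1 + ξ * ((x j - μ) / σ)
  swap
  · rw [Set.indicator_of_notMem (by exact h)]
    simp only [ENNReal.ofReal_zero, ENNReal.toReal_zero, zero_smul, norm_zero]
    have := Finset.prod_nonneg (s := Finset.univ) fun j _ => hGnn (x j)
    positivity
  rw [Set.indicator_of_mem (by exact h), ENNReal.toReal_ofReal (by positivity), smul_eq_mul,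
    Real.norm_of_nonneg (by positivity)]
  obtain ⟨hanti, hpos⟩ := h
  have hGe : ∀ j, gevG μ σ ξ (1 / (2 * r)) (x j) = (σ⁻¹ * Real.exp (-(1 / ξ + 1) * Real.log (1 + ξ * ((x j - μ) / σ)))) *
    ((1 + ((1 + ξ * ((x j - μ) / σ)) ^ (-1 / ξ)) ^ (-(1/2) : ℝ)) *
      Real.exp (-(1 / (2 * r)) * (1 + ξ * ((x j - μ) / σ)) ^ (-1 / ξ))) := by
    intro j
    unfold gevG
    rw [Set.indicator_of_mem (by exact hpos j)]
  simp only [hGe]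
  set a : Fin r := ⟨r - 1, by omega⟩ with ha
  set p : Fin r := ⟨r - 2, by omega⟩ with hp
  have hpa : p < a := by rw [ha, hp, Fin.mk_lt_mk]; omega
  have hja : ∀ j : Fin r, j ≤ a := by intro j; rw [ha, Fin.le_def]; simp; omega
  have hlogT : Real.log (1 + ξ * ((x a - μ) / σ)) =
      -ξ * Real.log ((1 + ξ * ((x a - μ) / σ)) ^ (-1 / ξ)) := by
    rw [Real.log_rpow (hpos a)]; field_simp
  have hTle : ∀ j, (1 + ξ * ((x j - μ) / σ)) ^ (-1 / ξ) ≤ (1 + ξ * ((x a - μ) / σ)) ^ (-1 / ξ) := by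
    intro j
    rcases (hja j).eq_or_lt with h | h
    · rw [h]
    · exact (gev_T_anti μ σ ξ hσ hξ (hanti h) (hpos a) (hpos j)).le
  have hTpos : ∀ j, 0 < (1 + ξ * ((x j - μ) / σ)) ^ (-1 / ξ) :=
    fun j => Real.rpow_pos_of_pos (hpos j) _
  have hb := gev_bound (-Real.log σ) (-(1 + ξ)) _ _ (hTpos p)
    (gev_T_anti μ σ ξ hσ hξ (hanti hpa) (hpos a) (hpos p))
  have hY : (1 / ξ + 1) * Real.log (1 + ξ * ((x a - μ) / σ)) =
      -(1 + ξ) * Real.log ((1 + ξ * ((x a - μ) / σ)) ^ (-1 / ξ)) := by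
    rw [hlogT]; field_simp
  rw [hY]
  have hexp : (σ ^ r)⁻¹ * Real.exp
      (-(1 + ξ * ((x a - μ) / σ)) ^ (-1 / ξ)
        - (1 / ξ + 1) * ∑ j, Real.log (1 + ξ * ((x j - μ) / σ))) =
      Real.exp (-(1 + ξ * ((x a - μ) / σ)) ^ (-1 / ξ)) *
      ∏ j, (σ⁻¹ * Real.exp (-(1 / ξ + 1) * Real.log (1 + ξ * ((x j - μ) / σ)))) := by
    rw [Finset.prod_mul_distrib, ← Real.exp_sum, ← Finset.mul_sum, sub_eq_add_neg, Real.exp_add]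
    simp
    ring
  rw [hexp]
  generalize hT : (fun j => (1 + ξ * ((x j - μ) / σ)) ^ (-1 / ξ)) = T at *
  have hT' : ∀ j, (1 + ξ * ((x j - μ) / σ)) ^ (-1 / ξ) = T j := fun j => by rw [← hT]
  simp only [hT'] at hTle hTpos hb ⊢
  have hP : 0 ≤ ∏ j, (σ⁻¹ * Real.exp (-(1 / ξ + 1) * Real.log (1 + ξ * ((x j - μ) / σ)))) :=
    Finset.prod_nonneg fun j _ => by positivity
  conv_rhs => rw [Finset.prod_mul_distrib]
  have hfin : (1 + T a ^ (-(1/2) : ℝ)) * Real.exp (-T a / 2) ≤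
      ∏ j, ((1 + T j ^ (-(1/2) : ℝ)) * Real.exp (-(1 / (2 * (r : ℝ))) * T j)) := by
    rw [Finset.prod_mul_distrib, ← Real.exp_sum, ← Finset.mul_sum]
    have h1 : ∀ j, 1 ≤ 1 + T j ^ (-(1/2) : ℝ) := fun j => by
      have := Real.rpow_pos_of_pos (hTpos j) (-(1/2)); linarith
    refine mul_le_mul ?_ ?_ (Real.exp_pos _).le
      (Finset.prod_nonneg fun j _ => zero_le_one.trans (h1 j))
    · rw [← Finset.mul_prod_erase Finset.univ _ (Finset.mem_univ a)]
      refine le_mul_of_one_le_right (zero_le_one.trans (h1 a)) ?_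
      calc (1 : ℝ) = ∏ j ∈ Finset.univ.erase a, (1 : ℝ) := by simp
        _ ≤ _ := Finset.prod_le_prod (fun _ _ => zero_le_one) (fun j _ => h1 j)
    · apply Real.exp_le_exp.2
      have hs : ∑ j, T j ≤ r * T a := by
        calc ∑ j, T j ≤ ∑ _j : Fin r, T a := Finset.sum_le_sum fun j _ => hTle j
          _ = _ := by simp
      have : (1 / (2 * (r : ℝ))) * ∑ j, T j ≤ (1 / (2 * (r : ℝ))) * (r * T a) := by gcongr
      have h2 : (1 / (2 * (r : ℝ))) * (r * T a) = T a / 2 := by field_simp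
      linarith
  clear hexp
  generalize (∏ j, (σ⁻¹ * Real.exp (-(1 / ξ + 1) * Real.log (1 + ξ * ((x j - μ) / σ))))) = P at *
  generalize (∏ j, ((1 + T j ^ (-(1/2) : ℝ)) * Real.exp (-(1 / (2 * (r : ℝ))) * T j))) = Q at *
  calc _ = ((-Real.log σ - T a + T p - -(1 + ξ) * Real.log (T a)) ^ 2 * Real.exp (-T a)) * P := by ring
    _ ≤ _ := mul_le_mul_of_nonneg_right hb hP
    _ ≤ (3 * ((-Real.log σ) ^ 2 + 8 * (1 + |-(1 + ξ)|) ^ 2 + 16 * (-(1 + ξ)) ^ 2) * Q) * P :=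
        mul_le_mul_of_nonneg_right (mul_le_mul_of_nonneg_left hfin (by positivity)) hP
    _ = _ := by ring
end

section
/- Let (X_1,…,X_r) have the GEV_r density f_r with parameters μ ∈ ℝ, σ > 0, ξ ≠ 0. Then for every j with 1 ≤ j ≤ r, E[log(1+ξ Z_j)] = −ξ ψ(j). -/
open MeasureTheory ProbabilityTheory Real Filter Topology

open scoped ENNReal

lemma gevr_split (m : Measure ℝ) [SigmaFinite m] (n : ℕ) (F : (Fin (n+1) → ℝ) → ℝ≥0∞)
    (hF : Measurable F) :
    ∫⁻ y, F y ∂(Measure.pi fun _ : Fin (n+1) => m)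
      = ∫⁻ t, ∫⁻ y, F (Fin.snoc (α := fun _ => ℝ) y t) ∂(Measure.pi fun _ : Fin n => m) ∂m := by
  have h := (measurePreserving_piFinSuccAbove (fun _ : Fin (n+1) => m) (Fin.last n)).symm
  rw [← h.lintegral_comp hF, lintegral_prod]
  · simp [MeasurableEquiv.piFinSuccAbove, Fin.insertNthEquiv]
  · exact (hF.comp (MeasurableEquiv.measurable _)).aemeasurable

lemma gevr_meas_snoc (n : ℕ) :
    Measurable (fun p : ℝ × (Fin n → ℝ) => (Fin.snoc (α := fun _ => ℝ) p.2 p.1 : Fin (n+1) → ℝ)) := by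
  refine measurable_pi_iff.2 fun i => ?_
  refine Fin.lastCases ?_ (fun i => ?_) i
  · simpa using measurable_fst
  · simp only [Fin.snoc_castSucc]; fun_prop

lemma gevr_split' (m : Measure ℝ) [SigmaFinite m] (n : ℕ) (F : (Fin (n+1) → ℝ) → ℝ≥0∞)
    (hF : Measurable F) :
    ∫⁻ y, F y ∂(Measure.pi fun _ : Fin (n+1) => m)
      = ∫⁻ y, ∫⁻ t, F (Fin.snoc (α := fun _ => ℝ) y t) ∂m ∂(Measure.pi fun _ : Fin n => m) := by
  rw [gevr_split m n F hF, lintegral_lintegral_swap]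
  exact (hF.comp (gevr_meas_snoc n)).aemeasurable

lemma gevr_prod (n : ℕ) (f : Fin n → ℝ → ℝ≥0∞) (hf : ∀ i, Measurable (f i)) :
    ∫⁻ x : Fin n → ℝ, ∏ i, f i (x i) = ∏ i, ∫⁻ t, f i t := by
  induction n with
  | zero => simp [volume_pi]
  | succ n ih =>
    rw [volume_pi, gevr_split]
    · simp only [Fin.prod_univ_castSucc, Fin.snoc_castSucc, Fin.snoc_last]
      rw [← ih _ (fun i => hf _), volume_pi]
      have : ∀ t, ∫⁻ (y : Fin n → ℝ), (∏ i : Fin n, f i.castSucc (y i)) * f (Fin.last n) t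
          ∂(Measure.pi fun _ => volume) = (∫⁻ (y : Fin n → ℝ), (∏ i : Fin n, f i.castSucc (y i)) 
          ∂(Measure.pi fun _ => volume)) * f (Fin.last n) t := fun t =>
        lintegral_mul_const _ (Finset.measurable_prod _ fun i _ => (hf _).comp (measurable_pi_apply i))
      simp_rw [this]
      rw [lintegral_const_mul _ (hf _)]
    · exact Finset.measurable_prod _ fun i _ => (hf _).comp (measurable_pi_apply i)

lemma gevr_pi_withDensity (n : ℕ) (w : ℝ → ℝ≥0∞) (hw : Measurable w)
    [SigmaFinite ((volume : Measure ℝ).withDensity w)] :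
    Measure.pi (fun _ : Fin n => (volume : Measure ℝ).withDensity w)
      = (volume : Measure (Fin n → ℝ)).withDensity (fun x => ∏ i, w (x i)) := by
  refine Measure.pi_eq fun s hs => ?_
  rw [withDensity_apply _ (MeasurableSet.univ_pi hs),
    ← lintegral_indicator (MeasurableSet.univ_pi hs)]
  simp_rw [withDensity_apply _ (hs _), ← lintegral_indicator (hs _)]
  rw [← gevr_prod n _ (fun i => hw.indicator (hs i))]
  congr 1 with x
  by_cases hx : x ∈ Set.univ.pi s
  · rw [Set.indicator_of_mem hx]
    refine Finset.prod_congr rfl fun i _ => ?_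
    rw [Set.indicator_of_mem (hx i trivial)]
  · rw [Set.indicator_of_notMem hx]
    simp only [Set.mem_univ_pi, not_forall] at hx
    obtain ⟨i, hi⟩ := hx
    exact (Finset.prod_eq_zero (Finset.mem_univ i) (Set.indicator_of_notMem hi _)).symm

lemma gevr_strictMono_snoc (n : ℕ) (y : Fin (n+1) → ℝ) (t : ℝ) :
    StrictMono (Fin.snoc (α := fun _ => ℝ) y t : Fin (n+2) → ℝ) ↔
      StrictMono y ∧ y (Fin.last n) < t := by
  rw [Fin.strictMono_iff_lt_succ, Fin.strictMono_iff_lt_succ, Fin.forall_fin_succ' ]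
  simp only [Fin.succ_last, Fin.snoc_castSucc, Fin.snoc_last, Fin.succ_castSucc]

lemma gevr_meas_sm (n : ℕ) : MeasurableSet {y : Fin n → ℝ | StrictMono y} := by
  have : {y : Fin n → ℝ | StrictMono y} = ⋂ i, ⋂ j, {y | i < j → y i < y j} := by
    ext y; simp [StrictMono]
  rw [this]
  refine MeasurableSet.iInter fun i => MeasurableSet.iInter fun j => ?_
  by_cases h : i < j
  · simpa [h] using measurableSet_lt (measurable_pi_apply i) (measurable_pi_apply j)
  · simp [h]

/-- indicator of strictly increasing vectors -/
noncomputable def gevrInd (n : ℕ) (y : Fin n → ℝ) : ℝ≥0∞ :=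
  Set.indicator {y : Fin n → ℝ | StrictMono y} (fun _ => 1) y

lemma gevr_meas_ind (n : ℕ) : Measurable (gevrInd n) :=
  measurable_const.indicator (gevr_meas_sm n)

lemma gevrInd_snoc (n : ℕ) (y : Fin (n+1) → ℝ) (t : ℝ) :
    gevrInd (n+2) (Fin.snoc (α := fun _ => ℝ) y t) =
      gevrInd (n+1) y * Set.indicator (Set.Iio t) (fun _ => 1) (y (Fin.last n)) := by
  classical
  simp only [gevrInd, Set.indicator_apply, Set.mem_ofPred_eq, gevr_strictMono_snoc, Set.mem_Iio]
  by_cases h1 : StrictMono y <;> by_cases h2 : y (Fin.last n) < t <;> simp [h1, h2]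

/-- Lebesgue measure on the positive half-line -/
noncomputable abbrev gevrM : Measure ℝ := volume.restrict (Set.Ioi 0)

lemma gevr_pow_int (n : ℕ) (t : ℝ) (ht : 0 < t) :
    ∫⁻ s, Set.indicator (Set.Iio t) (fun _ => 1) s * ENNReal.ofReal (s ^ n / n.factorial) ∂gevrM
      = ENNReal.ofReal (t ^ (n+1) / (n+1).factorial) := by
  have h1 : (fun s : ℝ => Set.indicator (Set.Iio t) (fun _ => (1:ℝ≥0∞)) s *
      ENNReal.ofReal (s ^ n / n.factorial)) =
      Set.indicator (Set.Iio t) (fun s => ENNReal.ofReal (s ^ n / n.factorial)) := by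
    ext s; by_cases h : s ∈ Set.Iio t <;> simp [h]
  rw [h1, lintegral_indicator measurableSet_Iio, Measure.restrict_restrict measurableSet_Iio,
    Set.inter_comm, Set.Ioi_inter_Iio, restrict_Ioo_eq_restrict_Ioc,
    ← ofReal_integral_eq_lintegral_ofReal]
  · rw [← intervalIntegral.integral_of_le ht.le]
    simp only [intervalIntegral.integral_div, integral_pow]
    congr 1
    rw [Nat.factorial_succ]; push_cast
    field_simp
    simp
  · exact (Continuous.integrableOn_Icc (by fun_prop)).mono_set Set.Ioc_subset_Icc_self
  · refine (ae_restrict_iff' measurableSet_Ioc).2 (ae_of_all _ fun s hs => ?_)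
    have := hs.1.le
    simp only [Pi.zero_apply]; positivity

lemma gevr_A (n : ℕ) (h : ℝ → ℝ≥0∞) (hh : Measurable h) :
    ∫⁻ y, gevrInd (n+1) y * h (y (Fin.last n)) ∂(Measure.pi fun _ : Fin (n+1) => gevrM)
      = ∫⁻ t, h t * ENNReal.ofReal (t ^ n / n.factorial) ∂gevrM := by
  induction n generalizing h with
  | zero =>
    rw [gevr_split]
    · have : ∀ y : Fin 1 → ℝ, gevrInd 1 y = 1 := fun y => by
        simp [gevrInd, Subsingleton.strictMono]
      have h2 : ∀ (y : Fin 0 → ℝ) (t : ℝ),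
          (Fin.snoc (α := fun _ => ℝ) y t : Fin 1 → ℝ) (Fin.last 0) = t :=
        fun y t => Fin.snoc_last (α := fun _ => ℝ) t y
      simp only [h2, this, Nat.reduceAdd, one_mul, lintegral_const, Measure.pi_univ]
      simp
    · exact (gevr_meas_ind _).mul (hh.comp (measurable_pi_apply _))
  | succ n ih =>
    rw [gevr_split]
    · simp only [gevrInd_snoc, Fin.snoc_last]
      refine lintegral_congr_ae ((ae_restrict_iff' measurableSet_Ioi).2 (ae_of_all _ fun t ht => ?_))
      simp only
      rw [lintegral_mul_const, ih, gevr_pow_int n t ht, mul_comm]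
      · exact measurable_const.indicator measurableSet_Iio
      · exact (gevr_meas_ind _).mul ((measurable_const.indicator measurableSet_Iio).comp
          (measurable_pi_apply _))
    · exact (gevr_meas_ind _).mul (hh.comp (measurable_pi_apply _))

lemma gevr_exp_int (s : ℝ) (hs : 0 ≤ s) :
    ∫⁻ t, Set.indicator (Set.Iio t) (fun _ => 1) s * ENNReal.ofReal (rexp (-t)) ∂gevrM
      = ENNReal.ofReal (rexp (-s)) := by
  have h1 : (fun t : ℝ => Set.indicator (Set.Iio t) (fun _ => (1:ℝ≥0∞)) s *
      ENNReal.ofReal (rexp (-t))) =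
      Set.indicator (Set.Ioi s) (fun t => ENNReal.ofReal (rexp (-t))) := by
    ext t
    by_cases h : s < t <;> simp [h]
  rw [h1, lintegral_indicator measurableSet_Ioi, Measure.restrict_restrict measurableSet_Ioi,
    Set.Ioi_inter_Ioi, sup_eq_left.2 hs, ← ofReal_integral_eq_lintegral_ofReal,
    integral_exp_neg_Ioi]
  · exact integrableOn_exp_neg_Ioi s
  · exact ae_of_all _ fun t => (exp_pos _).le

lemma gevr_B (k n : ℕ) (hkn : k ≤ n) (g : ℝ → ℝ≥0∞) (hg : Measurable g) :
    ∫⁻ y, gevrInd (n+1) y * (ENNReal.ofReal (rexp (-(y (Fin.last n)))) *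
        g (y ⟨k, Nat.lt_succ_of_le hkn⟩)) ∂(Measure.pi fun _ : Fin (n+1) => gevrM)
      = ∫⁻ t, ENNReal.ofReal (rexp (-t)) * g t * ENNReal.ofReal (t ^ k / k.factorial) ∂gevrM := by
  induction n, hkn using Nat.le_induction with
  | base => exact gevr_A k (fun t => ENNReal.ofReal (rexp (-t)) * g t) (by fun_prop)
  | succ n hkn ih =>
    rw [← ih, gevr_split']
    · have e : (⟨k, by omega⟩ : Fin (n+2)) = Fin.castSucc ⟨k, Nat.lt_succ_of_le hkn⟩ := rfl
      have hpos : ∀ᵐ y ∂(Measure.pi fun _ : Fin (n+1) => gevrM), 0 < y (Fin.last n) := by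
        have : ∀ᵐ t ∂gevrM, 0 < t := (ae_restrict_iff' measurableSet_Ioi).2 (ae_of_all _ fun t ht => ht)
        exact (Measure.quasiMeasurePreserving_eval (fun _ : Fin (n+1) => gevrM) (Fin.last n)).ae this
      refine lintegral_congr_ae ?_
      filter_upwards [hpos] with y hy
      rw [e]
      have hmt : Measurable (fun t : ℝ => Set.indicator (Set.Iio t) (fun _ => (1:ℝ≥0∞))
          (y (Fin.last n)) * ENNReal.ofReal (rexp (-t))) := by
        refine Measurable.mul ?_ (by fun_prop)
        have : (fun t : ℝ => Set.indicator (Set.Iio t) (fun _ => (1:ℝ≥0∞)) (y (Fin.last n))) =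
            Set.indicator (Set.Ioi (y (Fin.last n))) (fun _ => 1) := by
          ext t
          by_cases h : y (Fin.last n) < t <;> simp [h]
        rw [this]
        exact measurable_const.indicator measurableSet_Ioi
      simp only [gevrInd_snoc, Fin.snoc_last, Fin.snoc_castSucc]
      rw [← gevr_exp_int _ hy.le, ← lintegral_mul_const, ← lintegral_const_mul]
      · congr 1 with t; ring
      · exact hmt.mul_const _
      · exact hmt
    · exact (gevr_meas_ind _).mul (by fun_prop)

/-- the coordinate transformation -/
noncomputable def gevrT (μ σ ξ x : ℝ) : ℝ := (1 + ξ * ((x - μ) / σ)) ^ (-1 / ξ)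

/-- the intensity -/
noncomputable def gevrW (μ σ ξ x : ℝ) : ℝ :=
  if 0 < 1 + ξ * ((x - μ) / σ) then σ⁻¹ * (1 + ξ * ((x - μ) / σ)) ^ (-1 / ξ - 1) else 0

lemma gevrT_meas (μ σ ξ : ℝ) : Measurable (gevrT μ σ ξ) := by
  unfold gevrT; fun_prop

lemma gevrD_meas (μ σ ξ : ℝ) : MeasurableSet {x : ℝ | 0 < 1 + ξ * ((x - μ) / σ)} :=
  measurableSet_lt (by fun_prop) (by fun_prop)

lemma gevrW_meas (μ σ ξ : ℝ) : Measurable (gevrW μ σ ξ) := by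
  unfold gevrW
  exact Measurable.ite (gevrD_meas μ σ ξ) (by fun_prop) (by fun_prop)

lemma gevrT_lt (μ σ ξ : ℝ) (hσ : 0 < σ) (hξ : ξ ≠ 0) (x y : ℝ)
    (hx : 0 < 1 + ξ * ((x - μ) / σ)) (hxy : x < y)
    (hy : 0 < 1 + ξ * ((y - μ) / σ)) : gevrT μ σ ξ y < gevrT μ σ ξ x := by
  unfold gevrT
  have h : (x - μ) / σ < (y - μ) / σ := by gcongr
  rcases lt_or_gt_of_ne hξ with h0 | h0
  · refine Real.rpow_lt_rpow hy.le ?_ (div_pos_of_neg_of_neg (by norm_num) h0)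
    nlinarith
  · refine Real.rpow_lt_rpow_of_neg hx ?_ (div_neg_of_neg_of_pos (by norm_num) h0)
    nlinarith

lemma gevrT_lt_iff (μ σ ξ : ℝ) (hσ : 0 < σ) (hξ : ξ ≠ 0) (x y : ℝ)
    (hx : 0 < 1 + ξ * ((x - μ) / σ)) 
    (hy : 0 < 1 + ξ * ((y - μ) / σ)) : gevrT μ σ ξ y < gevrT μ σ ξ x ↔ x < y := by
  refine ⟨fun h => ?_, fun h => gevrT_lt μ σ ξ hσ hξ x y hx h hy⟩
  by_contra hn
  rcases (not_lt.1 hn).lt_or_eq with h1 | h1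
  · exact absurd (gevrT_lt μ σ ξ hσ hξ y x hy h1 hx) (not_lt.2 h.le)
  · subst h1; exact lt_irrefl _ h

lemma gevrT_image (μ σ ξ : ℝ) (hσ : 0 < σ) (hξ : ξ ≠ 0) :
    gevrT μ σ ξ '' {x : ℝ | 0 < 1 + ξ * ((x - μ) / σ)} = Set.Ioi 0 := by
  ext y
  constructor
  · rintro ⟨x, hx, rfl⟩
    exact Real.rpow_pos_of_pos hx _
  · intro hy
    have hy : 0 < y := hy
    have e : 1 + ξ * ((μ + σ * ((y ^ (-ξ) - 1) / ξ) - μ) / σ) = y ^ (-ξ) := by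
      field_simp; ring
    refine ⟨μ + σ * ((y ^ (-ξ) - 1) / ξ), ?_, ?_⟩
    · rw [Set.mem_ofPred_eq, e]; exact Real.rpow_pos_of_pos hy _
    · unfold gevrT
      rw [e, ← Real.rpow_mul hy.le, show -ξ * (-1 / ξ) = 1 by field_simp, Real.rpow_one]

lemma gevrT_deriv (μ σ ξ : ℝ) (hσ : 0 < σ) (hξ : ξ ≠ 0) (x : ℝ)
    (hx : 0 < 1 + ξ * ((x - μ) / σ)) :
    HasDerivAt (gevrT μ σ ξ) (-(σ⁻¹ * (1 + ξ * ((x - μ) / σ)) ^ (-1 / ξ - 1))) x := by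
  have h1 : HasDerivAt (fun x : ℝ => 1 + ξ * ((x - μ) / σ)) (ξ * (1 / σ)) x :=
    ((((hasDerivAt_id x).sub_const μ).div_const σ).const_mul ξ).const_add 1
  have h2 := h1.rpow_const (p := -1 / ξ) (Or.inl hx.ne')
  convert! h2 using 1
  field_simp

lemma gevrT_mp (μ σ ξ : ℝ) (hσ : 0 < σ) (hξ : ξ ≠ 0) :
    MeasurePreserving (gevrT μ σ ξ)
      ((volume : Measure ℝ).withDensity (fun x => ENNReal.ofReal (gevrW μ σ ξ x))) gevrM := by
  refine ⟨gevrT_meas μ σ ξ, Measure.ext_of_lintegral _ fun f hf => ?_⟩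
  rw [lintegral_map hf (gevrT_meas μ σ ξ), gevrM, ← gevrT_image μ σ ξ hσ hξ,
    lintegral_image_eq_lintegral_abs_deriv_mul (gevrD_meas μ σ ξ)
      (fun x hx => (gevrT_deriv μ σ ξ hσ hξ x hx).hasDerivWithinAt),
    lintegral_withDensity_eq_lintegral_mul _ (gevrW_meas μ σ ξ).ennreal_ofReal
      (show Measurable fun x => f (gevrT μ σ ξ x) from hf.comp (gevrT_meas μ σ ξ)), ← lintegral_indicator (gevrD_meas μ σ ξ)]
  · congr 1 with x
    by_cases hx : 0 < 1 + ξ * ((x - μ) / σ)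
    · rw [Set.indicator_of_mem (by exact hx)]
      have : 0 ≤ σ⁻¹ * (1 + ξ * ((x - μ) / σ)) ^ (-1 / ξ - 1) :=
        mul_nonneg (inv_pos.2 hσ).le (Real.rpow_nonneg hx.le _)
      simp [gevrW, hx, abs_neg, abs_of_nonneg this]
    · rw [Set.indicator_of_notMem (by exact hx)]
      simp [gevrW, hx]
  · intro x hx y hy hxy
    by_contra hne
    rcases lt_or_gt_of_ne hne with h | h
    · exact (gevrT_lt μ σ ξ hσ hξ x y hx h hy).ne' hxy
    · exact (gevrT_lt μ σ ξ hσ hξ y x hy h hx).ne hxy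

lemma gevr_density_eq (μ σ ξ : ℝ) (hσ : 0 < σ) (hξ : ξ ≠ 0) (n : ℕ) (x : Fin (n+1) → ℝ) :
    ENNReal.ofReal (gevrDensity μ σ ξ (n+1) x) =
      (∏ i, ENNReal.ofReal (gevrW μ σ ξ (x i))) *
      (gevrInd (n+1) (fun i => gevrT μ σ ξ (x i)) *
        ENNReal.ofReal (rexp (-(gevrT μ σ ξ (x (Fin.last n)))))) := by
  by_cases hD : ∀ j, 0 < 1 + ξ * ((x j - μ) / σ)
  · have hiff : StrictMono (fun i => gevrT μ σ ξ (x i)) ↔ StrictAnti x := by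
      constructor
      · intro h i j hij
        exact (gevrT_lt_iff μ σ ξ hσ hξ _ _ (hD j) (hD i)).1 (h hij)
      · intro h i j hij
        exact (gevrT_lt_iff μ σ ξ hσ hξ _ _ (hD j) (hD i)).2 (h hij)
    by_cases hA : StrictAnti x
    · have h1 : gevrInd (n+1) (fun i => gevrT μ σ ξ (x i)) = 1 :=
        Set.indicator_of_mem (by exact hiff.2 hA) _
      have h2 : ∀ i, 0 ≤ gevrW μ σ ξ (x i) := fun i => by
        simp only [gevrW, hD i, if_true]
        exact mul_nonneg (inv_pos.2 hσ).le (Real.rpow_nonneg (hD i).le _)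
      rw [h1, one_mul, ← ENNReal.ofReal_prod_of_nonneg (fun i _ => h2 i),
        ← ENNReal.ofReal_mul (Finset.prod_nonneg fun i _ => h2 i)]
      congr 1
      rw [gevrDensity, dif_pos ⟨Nat.succ_pos n, hA, hD⟩]
      have e : (⟨n + 1 - 1, Nat.sub_lt (Nat.succ_pos n) Nat.one_pos⟩ : Fin (n+1)) = Fin.last n := rfl
      rw [e, sub_eq_add_neg, Real.exp_add]
      have h3 : ∏ i, gevrW μ σ ξ (x i) = (σ ^ (n+1))⁻¹ *
          rexp (-((1 / ξ + 1) * ∑ j, Real.log (1 + ξ * ((x j - μ) / σ)))) := by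
        simp only [gevrW, hD, if_true]
        rw [Finset.prod_mul_distrib, ← neg_mul, Finset.mul_sum, Real.exp_sum]
        simp only [Finset.prod_const, Finset.card_univ, Fintype.card_fin, inv_pow]
        congr 1
        refine Finset.prod_congr rfl fun i _ => ?_
        rw [Real.rpow_def_of_pos (hD i)]
        congr 1; ring
      rw [h3]; unfold gevrT; ring
    · have h1 : gevrInd (n+1) (fun i => gevrT μ σ ξ (x i)) = 0 :=
        Set.indicator_of_notMem (fun h => hA (hiff.1 h)) _
      rw [h1, gevrDensity, dif_neg (fun h => hA h.2.1)]
      simp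
  · rw [gevrDensity, dif_neg (fun h => hD h.2.2)]
    obtain ⟨i, hi⟩ := not_forall.1 hD
    rw [Finset.prod_eq_zero (Finset.mem_univ i)]
    · simp
    · simp [gevrW, hi]

lemma gevr_T_pi_meas (μ σ ξ : ℝ) (n : ℕ) :
    Measurable (fun (x : Fin n → ℝ) i => gevrT μ σ ξ (x i)) :=
  measurable_pi_iff.2 fun i => (gevrT_meas μ σ ξ).comp (measurable_pi_apply i)

lemma gevr_measure_eq (μ σ ξ : ℝ) (hσ : 0 < σ) (hξ : ξ ≠ 0) (n : ℕ) :
    gevrMeasure μ σ ξ (n+1) = (Measure.pi (fun _ : Fin (n+1) =>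
      (volume : Measure ℝ).withDensity (fun x => ENNReal.ofReal (gevrW μ σ ξ x)))).withDensity
      (fun x => gevrInd (n+1) (fun i => gevrT μ σ ξ (x i)) *
        ENNReal.ofReal (rexp (-(gevrT μ σ ξ (x (Fin.last n)))))) := by
  have hm := gevrT_meas μ σ ξ
  have hw := gevrW_meas μ σ ξ
  rw [gevr_pi_withDensity _ _ hw.ennreal_ofReal, gevrMeasure, ← withDensity_mul]
  · congr 1 with x
    exact gevr_density_eq μ σ ξ hσ hξ n x
  · fun_prop
  · exact ((gevr_meas_ind _).comp (gevr_T_pi_meas μ σ ξ _)).mul (by fun_prop)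

lemma gevr_map (μ σ ξ : ℝ) (hσ : 0 < σ) (hξ : ξ ≠ 0) (n k : ℕ) (hkn : k ≤ n) :
    (gevrMeasure μ σ ξ (n+1)).map (fun x => gevrT μ σ ξ (x ⟨k, Nat.lt_succ_of_le hkn⟩)) =
      gevrM.withDensity (fun t => ENNReal.ofReal (rexp (-t) * (t ^ k / k.factorial))) := by
  have hm := gevrT_meas μ σ ξ
  have hT : Measurable (fun x : Fin (n+1) → ℝ => gevrT μ σ ξ (x ⟨k, Nat.lt_succ_of_le hkn⟩)) := by
    fun_prop
  refine Measure.ext_of_lintegral _ fun g hg => ?_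
  rw [lintegral_map hg hT, gevr_measure_eq μ σ ξ hσ hξ n,
    lintegral_withDensity_eq_lintegral_mul _ ?_ (show Measurable fun x : Fin (n+1) → ℝ =>
      g (gevrT μ σ ξ (x ⟨k, Nat.lt_succ_of_le hkn⟩)) from hg.comp hT),
    lintegral_withDensity_eq_lintegral_mul _ (by fun_prop) hg]
  · have h1 := gevr_B k n hkn g hg
    have h2 := (measurePreserving_pi (fun _ : Fin (n+1) =>
      (volume : Measure ℝ).withDensity (fun x => ENNReal.ofReal (gevrW μ σ ξ x)))
      (fun _ : Fin (n+1) => gevrM) (fun _ => gevrT_mp μ σ ξ hσ hξ))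
    rw [← h2.lintegral_comp] at h1
    · refine Eq.trans ?_ (h1.trans ?_)
      · congr 1 with x
        simp [mul_assoc]
      · congr 1 with t
        rw [Pi.mul_apply, ENNReal.ofReal_mul (exp_pos _).le]; ring
    · exact (gevr_meas_ind _).mul (by fun_prop)
  · exact ((gevr_meas_ind _).comp (gevr_T_pi_meas μ σ ξ _)).mul (by fun_prop)

lemma gevr_gamma (k : ℕ) :
    ∫ t in Set.Ioi (0:ℝ), t ^ k * (Real.log t * rexp (-t)) = deriv Real.Gamma (k + 1) := by
  have h0 : (0:ℝ) < ((k:ℂ) + 1).re := by simp; positivity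
  have h1 := Complex.hasDerivAt_GammaIntegral h0
  have h2 : HasDerivAt Complex.Gamma (∫ t : ℝ in Set.Ioi 0,
      (t:ℂ) ^ ((k:ℂ) + 1 - 1) * (Real.log t * Real.exp (-t))) ((k:ℂ) + 1) := by
    refine h1.congr_of_eventuallyEq ?_
    have : {s : ℂ | 0 < s.re} ∈ 𝓝 ((k:ℂ) + 1) :=
      (isOpen_lt continuous_const Complex.continuous_re).mem_nhds h0
    filter_upwards [this] with a ha using Complex.Gamma_eq_integral ha
  have h3 : (∫ t : ℝ in Set.Ioi 0, (t:ℂ) ^ ((k:ℂ) + 1 - 1) * (Real.log t * Real.exp (-t)))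
      = ((∫ t in Set.Ioi (0:ℝ), t ^ k * (Real.log t * rexp (-t)) : ℝ) : ℂ) := by
    rw [← integral_complex_ofReal]
    congr 1 with t
    simp
  rw [h3] at h2
  have h4 : HasDerivAt Complex.Gamma
      ((∫ t in Set.Ioi (0:ℝ), t ^ k * (Real.log t * rexp (-t)) : ℝ) : ℂ) (((k + 1 : ℝ)) : ℂ) := by
    simpa using h2
  have h5 := h4.real_of_complex
  have h6 : HasDerivAt Real.Gamma (∫ t in Set.Ioi (0:ℝ), t ^ k * (Real.log t * rexp (-t)))
      (k + 1) := h5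
  exact h6.deriv.symm

/-- under the GEV_r distribution, `E[log(1+ξZ_j)] = −ξψ(j)` for
every `1 ≤ j ≤ r`. -/
theorem gevr_moment_log_transform
    (μ σ ξ : ℝ) (hσ : 0 < σ) (hξ : ξ ≠ 0) (r : ℕ) (hr : 1 ≤ r)
    (j : ℕ) (hj1 : 1 ≤ j) (hjr : j ≤ r) :
    ∫ x : Fin r → ℝ,
        Real.log (1 + ξ * ((x ⟨j - 1, by omega⟩ - μ) / σ))
        ∂(gevrMeasure μ σ ξ r)
      = -ξ * digamma j := by
  obtain ⟨n, rfl⟩ : ∃ n, r = n + 1 := ⟨r - 1, by omega⟩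
  obtain ⟨k, rfl⟩ : ∃ k, j = k + 1 := ⟨j - 1, by omega⟩
  have hkn : k ≤ n := by omega
  have hm := gevrT_meas μ σ ξ
  have hT : Measurable (fun x : Fin (n+1) → ℝ => gevrT μ σ ξ (x ⟨k, Nat.lt_succ_of_le hkn⟩)) := by
    fun_prop
  have hae : ∀ᵐ x ∂(gevrMeasure μ σ ξ (n+1)),
      0 < 1 + ξ * ((x ⟨k, Nat.lt_succ_of_le hkn⟩ - μ) / σ) := by
    rw [gevrMeasure, ae_withDensity_iff]
    · refine ae_of_all _ fun x hx => ?_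
      by_contra hn
      refine hx ?_
      rw [gevrDensity, dif_neg (fun h => hn (h.2.2 _))]
      simp
    · have : Measurable (fun x : Fin (n+1) → ℝ =>
        (∏ i, ENNReal.ofReal (gevrW μ σ ξ (x i))) *
          (gevrInd (n+1) (fun i => gevrT μ σ ξ (x i)) *
          ENNReal.ofReal (rexp (-(gevrT μ σ ξ (x (Fin.last n))))))) := by
        have hw := gevrW_meas μ σ ξ
        refine Measurable.mul (by fun_prop) ?_
        exact ((gevr_meas_ind _).comp (gevr_T_pi_meas μ σ ξ _)).mul (by fun_prop)
      rw [show (fun x => ENNReal.ofReal (gevrDensity μ σ ξ (n+1) x)) = _ from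
        funext (gevr_density_eq μ σ ξ hσ hξ n)]
      exact this
  have e1 : ∫ x : Fin (n+1) → ℝ, Real.log (1 + ξ * ((x ⟨k + 1 - 1, by omega⟩ - μ) / σ))
        ∂(gevrMeasure μ σ ξ (n+1)) =
      ∫ x : Fin (n+1) → ℝ, -ξ * Real.log (gevrT μ σ ξ (x ⟨k, Nat.lt_succ_of_le hkn⟩))
        ∂(gevrMeasure μ σ ξ (n+1)) := by
    refine integral_congr_ae ?_
    filter_upwards [hae] with x hx
    rw [gevrT, Real.log_rpow hx]
    simp only [Nat.add_sub_cancel]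
    field_simp
  rw [e1, ← integral_map (φ := fun x : Fin (n+1) → ℝ =>
      gevrT μ σ ξ (x ⟨k, Nat.lt_succ_of_le hkn⟩)) (f := fun t => -ξ * Real.log t) hT.aemeasurable
      (by fun_prop), gevr_map μ σ ξ hσ hξ n k hkn,
    integral_withDensity_eq_integral_toReal_smul (by fun_prop) (by simp)]
  have e2 : ∫ t in Set.Ioi (0:ℝ), (ENNReal.ofReal (rexp (-t) * (t ^ k / k.factorial))).toReal •
      (-ξ * Real.log t) = ∫ t in Set.Ioi (0:ℝ), (-ξ / k.factorial) *
        (t ^ k * (Real.log t * rexp (-t))) := by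
    refine setIntegral_congr_fun measurableSet_Ioi fun t ht => ?_
    have ht : 0 < t := ht
    rw [ENNReal.toReal_ofReal (by positivity), smul_eq_mul]
    ring
  rw [e2, integral_const_mul, gevr_gamma, digamma, Nat.cast_succ, Real.Gamma_nat_eq_factorial]
  ring
end

section
/- Let (X_1,…,X_r) have the GEV_r density f_r with parameters μ ∈ ℝ, σ > 0, ξ ≠ 0. Then for every j with 1 ≤ j ≤ r, E[(1+ξ Z_j)^{−2/ξ}] = j(j+1); in particular this expectation is finite. -/
open MeasureTheory ProbabilityTheory Real Filter Topology

noncomputable def chainW (W : ℝ → ENNReal) {n : ℕ} (x : Fin n → ℝ) : ENNReal :=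
  Set.indicator {x : Fin n → ℝ | StrictAnti x} (fun x => ∏ i, W (x i)) x

lemma measurableSet_strictAnti (n : ℕ) : MeasurableSet {x : Fin n → ℝ | StrictAnti x} := by
  have : {x : Fin n → ℝ | StrictAnti x} = ⋂ i, ⋂ j, ⋂ (_ : i < j), {x | x j < x i} := by
    ext x; simp [StrictAnti]
  rw [this]
  refine MeasurableSet.iInter fun i => MeasurableSet.iInter fun j => MeasurableSet.iInter fun _ => ?_
  exact measurableSet_lt (measurable_pi_apply j) (measurable_pi_apply i)

lemma measurable_chainW {W : ℝ → ENNReal} (hW : Measurable W) (n : ℕ) :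
    Measurable (chainW W : (Fin n → ℝ) → ENNReal) := by
  unfold chainW
  refine Measurable.indicator ?_ (measurableSet_strictAnti n)
  fun_prop

lemma strictAnti_snoc {n : ℕ} (x : Fin (n + 1) → ℝ) (t : ℝ) :
    StrictAnti (Fin.snoc x t : Fin (n + 2) → ℝ) ↔ StrictAnti x ∧ t < x (Fin.last n) := by
  constructor
  · intro h
    refine ⟨fun i j hij => ?_, ?_⟩
    · simpa using h (Fin.castSucc_lt_castSucc_iff.2 hij)
    · simpa using h (Fin.castSucc_lt_last (Fin.last n))
  · rintro ⟨h1, h2⟩ i j hij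
    induction j using Fin.lastCases with
    | last =>
      induction i using Fin.lastCases with
      | last => exact absurd hij (lt_irrefl _)
      | cast i => simpa using h2.trans_le (h1.antitone (Fin.le_last i))
    | cast j =>
      induction i using Fin.lastCases with
      | last => exact absurd hij (not_lt.2 (Fin.le_last _))
      | cast i => simpa using h1 (Fin.castSucc_lt_castSucc_iff.1 hij)

lemma chainW_snoc (W : ℝ → ENNReal) {n : ℕ} (x : Fin (n + 1) → ℝ) (t : ℝ) :
    chainW W (Fin.snoc x t : Fin (n + 2) → ℝ)
      = chainW W x * (W t * if t < x (Fin.last n) then 1 else 0) := by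
  by_cases h1 : StrictAnti x <;> by_cases h2 : t < x (Fin.last n) <;>
    simp [chainW, Set.indicator, strictAnti_snoc, h1, h2, Fin.prod_univ_castSucc, mul_assoc]

lemma lintegral_snoc {n : ℕ} (F : (Fin (n + 1) → ℝ) → ENNReal) (hF : Measurable F) :
    ∫⁻ y, F y = ∫⁻ x : Fin n → ℝ, ∫⁻ t : ℝ, F (Fin.snoc x t) := by
  have h := (volume_preserving_piFinSuccAbove (fun _ : Fin (n+1) => ℝ) (Fin.last n)).symm
  rw [← h.lintegral_comp hF, Measure.volume_eq_prod, lintegral_prod_symm]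
  · simp [MeasurableEquiv.piFinSuccAbove, Fin.insertNthEquiv]
  · exact (hF.comp (MeasurableEquiv.measurable _)).aemeasurable

section gen
variable {W : ℝ → ENNReal} {g : ℝ → ℝ} {dom : Set ℝ}

lemma chainW_ne_zero (h0 : ∀ t, t ∉ dom → W t = 0) {n : ℕ} {x : Fin n → ℝ}
    (hx : chainW W x ≠ 0) (i : Fin n) : x i ∈ dom := by
  by_contra hc
  apply hx
  unfold chainW Set.indicator
  split_ifs
  · exact Finset.prod_eq_zero (Finset.mem_univ i) (h0 _ hc)
  · rfl

lemma chain_step (hW : Measurable W) (hg : Measurable g)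
    (h0 : ∀ t, t ∉ dom → W t = 0)
    (hK : ∀ k : ℝ → ENNReal, ∫⁻ t, W t * k (g t) = ∫⁻ u in Set.Ioi 0, k u)
    (hanti : StrictAntiOn g dom) (hpos : ∀ t ∈ dom, 0 < g t)
    {n : ℕ} (G : (Fin (n + 1) → ℝ) → ENNReal) (hG : Measurable G)
    (h : ℝ → ENNReal) (hh : Measurable h) :
    ∫⁻ y : Fin (n + 2) → ℝ, chainW W y * (G (Fin.init y) * h (g (y (Fin.last (n + 1)))))
      = ∫⁻ x : Fin (n + 1) → ℝ, chainW W x *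
          (G x * ∫⁻ u in Set.Ioi (g (x (Fin.last n))), h u) := by
  have hinit : Measurable (fun y : Fin (n + 2) → ℝ => (Fin.init y : Fin (n + 1) → ℝ)) := by
    unfold Fin.init; fun_prop
  rw [lintegral_snoc]
  · refine lintegral_congr fun x => ?_
    by_cases hx : chainW W x = 0
    · simp [chainW_snoc, hx]
    have hl := chainW_ne_zero h0 hx (Fin.last n)
    simp only [chainW_snoc, Fin.init_snoc, Fin.snoc_last]
    have e : ∀ t, chainW W x * (W t * if t < x (Fin.last n) then 1 else 0) * (G x * h (g t))
        = (chainW W x * G x) * (W t * (Set.indicator (Set.Ioi (g (x (Fin.last n)))) h (g t))) := by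
      intro t
      by_cases ht : t ∈ dom
      · have : t < x (Fin.last n) ↔ g (x (Fin.last n)) < g t := (hanti.lt_iff_gt hl ht).symm
        by_cases h3 : t < x (Fin.last n)
        · simp only [h3, Set.indicator, Set.mem_Ioi, this.1 h3, if_true]; ring
        · simp [h3, Set.indicator, this.not.1 h3]
      · simp [h0 t ht]
    simp_rw [e]
    have hm : Measurable fun t => W t * (Set.indicator (Set.Ioi (g (x (Fin.last n)))) h (g t)) :=
      hW.mul ((hh.indicator measurableSet_Ioi).comp hg)
    rw [lintegral_const_mul _ hm, hK, ← mul_assoc, ← lintegral_indicator measurableSet_Ioi,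
      ← lintegral_indicator measurableSet_Ioi, Set.indicator_indicator,
      Set.inter_eq_right.2 (Set.Ioi_subset_Ioi (hpos _ hl).le)]
  · exact (measurable_chainW hW _).mul ((hG.comp hinit).mul
      (hh.comp (hg.comp (measurable_pi_apply _))))

lemma lintegral_tail (n : ℕ) (h : ℝ → ENNReal) (hh : Measurable h) :
    ∫⁻ s in Set.Ioi (0 : ℝ), ENNReal.ofReal (s ^ n / n.factorial) * ∫⁻ u in Set.Ioi s, h u
      = ∫⁻ u in Set.Ioi (0 : ℝ), ENNReal.ofReal (u ^ (n + 1) / (n + 1).factorial) * h u := by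
  have e1 : ∀ s : ℝ, ENNReal.ofReal (s ^ n / n.factorial) * ∫⁻ u in Set.Ioi s, h u
      = ∫⁻ u, ENNReal.ofReal (s ^ n / n.factorial) *
          (Set.indicator {p : ℝ × ℝ | p.1 < p.2} (fun p => h p.2) (s, u)) := by
    intro s
    rw [lintegral_const_mul, ← lintegral_indicator measurableSet_Ioi]
    · rfl
    · exact ((hh.comp measurable_snd).indicator
        (measurableSet_lt measurable_fst measurable_snd)).comp measurable_prodMk_left
  simp_rw [e1]
  rw [lintegral_lintegral_swap]
  · rw [← lintegral_indicator measurableSet_Ioi]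
    refine lintegral_congr fun u => ?_
    have e2 : ∀ s : ℝ, ENNReal.ofReal (s ^ n / n.factorial) *
          (Set.indicator {p : ℝ × ℝ | p.1 < p.2} (fun p => h p.2) (s, u))
        = Set.indicator (Set.Iio u) (fun s => ENNReal.ofReal (s ^ n / n.factorial)) s * h u := by
      intro s
      by_cases hs : s < u <;> simp [Set.indicator, hs]
    simp_rw [e2]
    have hms : Measurable (fun s : ℝ => ENNReal.ofReal (s ^ n / n.factorial)) := by fun_prop
    rw [lintegral_mul_const _ (hms.indicator measurableSet_Iio),
      lintegral_indicator measurableSet_Iio, Measure.restrict_restrict measurableSet_Iio]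
    by_cases hu : 0 < u
    · rw [Set.indicator_of_mem (show u ∈ Set.Ioi 0 from hu)]
      congr 1
      rw [Set.inter_comm, Set.Ioi_inter_Iio, ← ofReal_integral_eq_lintegral_ofReal]
      · rw [← integral_Ioc_eq_integral_Ioo, ← intervalIntegral.integral_of_le hu.le]
        congr 1
        rw [intervalIntegral.integral_div, integral_pow, Nat.factorial_succ]
        push_cast
        field_simp
        simp
      · apply IntegrableOn.mono_set (t := Set.Icc 0 u) _ Set.Ioo_subset_Icc_self
        exact Continuous.integrableOn_Icc (by fun_prop)
      · refine (ae_restrict_iff' measurableSet_Ioo).2 (ae_of_all _ fun s hs => ?_)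
        have := hs.1.le
        simp only [Pi.zero_apply]; positivity
    · have : Set.Iio u ∩ Set.Ioi 0 = (∅ : Set ℝ) := by
        ext s; simp; intro h; linarith [not_lt.1 hu]
      simp [this, Set.indicator, hu]
  · refine Measurable.aemeasurable ?_
    refine Measurable.mul (by fun_prop) ?_
    exact ((hh.comp measurable_snd).indicator
        (measurableSet_lt measurable_fst measurable_snd))

lemma measurable_tail (h : ℝ → ENNReal) (hh : Measurable h) :
    Measurable fun s : ℝ => ∫⁻ u in Set.Ioi s, h u := by
  have : (fun s : ℝ => ∫⁻ u in Set.Ioi s, h u) = fun s => ∫⁻ u,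
      (Set.indicator {p : ℝ × ℝ | p.1 < p.2} (fun p => h p.2) (s, u)) := by
    ext s
    rw [← lintegral_indicator measurableSet_Ioi]
    rfl
  rw [this]
  exact ((hh.comp measurable_snd).indicator
        (measurableSet_lt measurable_fst measurable_snd)).lintegral_prod_right'

lemma chain_last (hW : Measurable W) (hg : Measurable g)
    (h0 : ∀ t, t ∉ dom → W t = 0)
    (hK : ∀ k : ℝ → ENNReal, ∫⁻ t, W t * k (g t) = ∫⁻ u in Set.Ioi 0, k u)
    (hanti : StrictAntiOn g dom) (hpos : ∀ t ∈ dom, 0 < g t) (n : ℕ) :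
    ∀ (h : ℝ → ENNReal), Measurable h →
    ∫⁻ y : Fin (n + 1) → ℝ, chainW W y * h (g (y (Fin.last n)))
      = ∫⁻ u in Set.Ioi (0 : ℝ), ENNReal.ofReal (u ^ n / n.factorial) * h u := by
  induction n with
  | zero =>
    intro h hh
    have hsub : ∀ y : Fin (0 + 1) → ℝ, StrictAnti y := fun y i j hij =>
      absurd hij (by omega)
    have hlast : ∀ (x : Fin 0 → ℝ) (t : ℝ),
        (Fin.snoc x t : Fin (0 + 1) → ℝ) 0 = t := fun x t => Fin.snoc_last (α := fun _ => ℝ) t x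
    rw [lintegral_snoc]
    · simp [chainW, Set.indicator, hsub, hlast, hK]
      rw [volume_pi, Measure.pi_of_empty]
      simp
    · exact (measurable_chainW hW _).mul (hh.comp (hg.comp (measurable_pi_apply _)))
  | succ n ih =>
    intro h hh
    have := chain_step hW hg h0 hK hanti hpos (n := n) (fun _ => 1) measurable_const h hh
    simp only [one_mul] at this
    rw [this, ih (fun s => ∫⁻ u in Set.Ioi s, h u) (measurable_tail h hh), lintegral_tail n h hh]

lemma tail_exp (s : ℝ) : ∫⁻ u in Set.Ioi s, ENNReal.ofReal (Real.exp (-u))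
    = ENNReal.ofReal (Real.exp (-s)) := by
  rw [← ofReal_integral_eq_lintegral_ofReal (integrableOn_exp_neg_Ioi s)
    (ae_of_all _ fun _ => (Real.exp_pos _).le), integral_exp_neg_Ioi]

lemma chain_mid (hW : Measurable W) (hg : Measurable g)
    (h0 : ∀ t, t ∉ dom → W t = 0)
    (hK : ∀ k : ℝ → ENNReal, ∫⁻ t, W t * k (g t) = ∫⁻ u in Set.Ioi 0, k u)
    (hanti : StrictAntiOn g dom) (hpos : ∀ t ∈ dom, 0 < g t) (n : ℕ)
    (q : ℝ → ENNReal) (hq : Measurable q) (d : ℕ) :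
    ∫⁻ y : Fin (n + d + 1) → ℝ, chainW W y * (q (g (y ⟨n, by omega⟩)) *
        ENNReal.ofReal (Real.exp (-(g (y (Fin.last (n + d)))))))
      = ∫⁻ u in Set.Ioi (0 : ℝ), ENNReal.ofReal (u ^ n / n.factorial) *
          (q u * ENNReal.ofReal (Real.exp (-u))) := by
  induction d with
  | zero =>
    exact chain_last hW hg h0 hK hanti hpos n
      (fun u => q u * ENNReal.ofReal (Real.exp (-u))) (by fun_prop)
  | succ d ih =>
    rw [← ih]
    have := chain_step hW hg h0 hK hanti hpos (n := n + d)
      (fun x => q (g (x ⟨n, by omega⟩))) (by fun_prop)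
      (fun u => ENNReal.ofReal (Real.exp (-u))) (by fun_prop)
    simp only [tail_exp] at this
    exact this
end gen

lemma gamma_value (n : ℕ) : ∫⁻ u in Set.Ioi (0 : ℝ), ENNReal.ofReal (u ^ n / n.factorial) *
          (ENNReal.ofReal (u ^ 2) * ENNReal.ofReal (Real.exp (-u)))
      = ENNReal.ofReal (((n : ℝ) + 1) * (n + 2)) := by
  have e : ∀ u ∈ Set.Ioi (0 : ℝ), ENNReal.ofReal (u ^ n / n.factorial) *
          (ENNReal.ofReal (u ^ 2) * ENNReal.ofReal (Real.exp (-u)))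
      = ENNReal.ofReal ((Real.exp (-u) * u ^ (((n : ℝ) + 3) - 1)) / n.factorial) := by
    intro u hu
    have hu' : 0 < u := hu
    rw [← ENNReal.ofReal_mul (by positivity), ← ENNReal.ofReal_mul (by positivity)]
    congr 1
    have : u ^ (((n : ℝ) + 3) - 1) = u ^ (n + 2) := by
      rw [← Real.rpow_natCast]; congr 1; push_cast; ring
    rw [this]; ring
  rw [setLIntegral_congr_fun measurableSet_Ioi e, ← ofReal_integral_eq_lintegral_ofReal]
  · rw [integral_div, ← Real.Gamma_eq_integral (by positivity)]
    congr 1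
    have := Real.Gamma_nat_eq_factorial (n + 2)
    push_cast at this
    rw [show (n : ℝ) + 3 = n + 2 + 1 by ring, this, Nat.factorial_succ, Nat.factorial_succ]
    push_cast
    field_simp
    ring
  · exact (Real.GammaIntegral_convergent (by positivity)).div_const _
  · refine (ae_restrict_iff' measurableSet_Ioi).2 (ae_of_all _ fun s hs => ?_)
    have : 0 < s := hs
    simp only [Pi.zero_apply]; positivity

/-- the affine base `1 + ξ z` -/
noncomputable def gevBase (μ σ ξ t : ℝ) : ℝ := 1 + ξ * ((t - μ) / σ)

noncomputable def gevU (μ σ ξ t : ℝ) : ℝ := gevBase μ σ ξ t ^ (-1 / ξ)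

noncomputable def gevW (μ σ ξ t : ℝ) : ENNReal :=
  Set.indicator {t | 0 < gevBase μ σ ξ t}
    (fun t => ENNReal.ofReal (σ⁻¹ * gevBase μ σ ξ t ^ (-1 / ξ - 1))) t

lemma measurable_gevBase (μ σ ξ : ℝ) : Measurable (gevBase μ σ ξ) := by
  unfold gevBase; fun_prop

lemma measurable_gevU (μ σ ξ : ℝ) : Measurable (gevU μ σ ξ) :=
  (measurable_gevBase μ σ ξ).pow_const _

lemma measurableSet_gevDom (μ σ ξ : ℝ) : MeasurableSet {t | 0 < gevBase μ σ ξ t} :=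
  measurableSet_lt measurable_const (measurable_gevBase μ σ ξ)

lemma measurable_gevW (μ σ ξ : ℝ) : Measurable (gevW μ σ ξ) := by
  refine Measurable.indicator ?_ (measurableSet_gevDom μ σ ξ)
  exact ENNReal.measurable_ofReal.comp (((measurable_gevBase μ σ ξ).pow_const _).const_mul _)

lemma gevU_anti (μ σ ξ : ℝ) (hσ : 0 < σ) (hξ : ξ ≠ 0) :
    StrictAntiOn (gevU μ σ ξ) {t | 0 < gevBase μ σ ξ t} := by
  intro s hs t ht hst
  have hz : (s - μ) / σ < (t - μ) / σ := by gcongr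
  unfold gevU
  have hs' : 0 < gevBase μ σ ξ s := hs
  have ht' : 0 < gevBase μ σ ξ t := ht
  rcases lt_or_gt_of_ne hξ with h | h
  · refine Real.rpow_lt_rpow ht'.le ?_ (div_pos_of_neg_of_neg (by norm_num) h)
    unfold gevBase
    nlinarith
  · refine Real.rpow_lt_rpow_of_neg hs' ?_ (div_neg_of_neg_of_pos (by norm_num) h)
    unfold gevBase
    nlinarith

lemma gevU_image (μ σ ξ : ℝ) (hσ : 0 < σ) (hξ : ξ ≠ 0) :
    gevU μ σ ξ '' {t | 0 < gevBase μ σ ξ t} = Set.Ioi 0 := by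
  ext u
  constructor
  · rintro ⟨t, ht, rfl⟩
    exact Real.rpow_pos_of_pos ht _
  · intro hu
    have hu' : 0 < u := hu
    have hb : gevBase μ σ ξ (μ + σ * ((u ^ (-ξ) - 1) / ξ)) = u ^ (-ξ) := by
      unfold gevBase; field_simp; ring
    refine ⟨μ + σ * ((u ^ (-ξ) - 1) / ξ), ?_, ?_⟩
    · show 0 < gevBase _ _ _ _
      rw [hb]; positivity
    · unfold gevU
      rw [hb, ← Real.rpow_mul hu'.le]
      have : -ξ * (-1 / ξ) = 1 := by field_simp
      rw [this, Real.rpow_one]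

lemma gevU_deriv (μ σ ξ : ℝ) (hξ : ξ ≠ 0) (t : ℝ) (ht : 0 < gevBase μ σ ξ t) :
    HasDerivAt (gevU μ σ ξ) (-(σ⁻¹ * gevBase μ σ ξ t ^ (-1 / ξ - 1))) t := by
  have h1 : HasDerivAt (gevBase μ σ ξ) (ξ * (1 / σ)) t :=
    ((((hasDerivAt_id t).sub_const μ).div_const σ).const_mul ξ).const_add 1
  have h2 := h1.rpow_const (p := -1 / ξ) (Or.inl ht.ne')
  have e : -(σ⁻¹ * gevBase μ σ ξ t ^ (-1 / ξ - 1))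
      = ξ * (1 / σ) * (-1 / ξ) * gevBase μ σ ξ t ^ (-1 / ξ - 1) := by
    have : ξ * (1 / σ) * (-1 / ξ) = -σ⁻¹ := by
      rw [one_div]; field_simp
    rw [this]; ring
  rw [e]
  exact h2

lemma gev_cov (μ σ ξ : ℝ) (hσ : 0 < σ) (hξ : ξ ≠ 0) (k : ℝ → ENNReal) :
    ∫⁻ t, gevW μ σ ξ t * k (gevU μ σ ξ t) = ∫⁻ u in Set.Ioi 0, k u := by
  rw [← gevU_image μ σ ξ hσ hξ, lintegral_image_eq_lintegral_abs_deriv_mul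
    (measurableSet_gevDom μ σ ξ)
    (fun t ht => (gevU_deriv μ σ ξ hξ t ht).hasDerivWithinAt) (gevU_anti μ σ ξ hσ hξ).injOn,
    ← lintegral_indicator (measurableSet_gevDom μ σ ξ)]
  refine lintegral_congr fun t => ?_
  by_cases ht : 0 < gevBase μ σ ξ t
  · have : 0 ≤ σ⁻¹ * gevBase μ σ ξ t ^ (-1 / ξ - 1) := by positivity
    simp only [gevW, Set.indicator, Set.mem_ofPred_eq, ht, if_true, abs_neg, abs_of_nonneg this]
  · simp [gevW, Set.indicator, ht]

lemma gevrDensity_eq_s7 (μ σ ξ : ℝ) (hσ : 0 < σ) (m : ℕ) (x : Fin (m + 1) → ℝ) :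
    ENNReal.ofReal (gevrDensity μ σ ξ (m + 1) x)
      = chainW (gevW μ σ ξ) x * ENNReal.ofReal (Real.exp (-(gevU μ σ ξ (x (Fin.last m))))) := by
  by_cases h1 : StrictAnti x
  swap
  · simp [gevrDensity, chainW, h1]
  by_cases h2 : ∀ j, 0 < gevBase μ σ ξ (x j)
  swap
  · have h3 : chainW (gevW μ σ ξ) x = 0 := by
      by_contra hc
      refine h2 (chainW_ne_zero (dom := {t | 0 < gevBase μ σ ξ t}) ?_ hc)
      intro t ht
      exact Set.indicator_of_notMem ht _
    rw [h3, zero_mul]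
    unfold gevrDensity
    rw [dif_neg, ENNReal.ofReal_zero]
    exact fun h => h2 h.2.2
  have hW : chainW (gevW μ σ ξ) x
      = ENNReal.ofReal (∏ i, σ⁻¹ * gevBase μ σ ξ (x i) ^ (-1 / ξ - 1)) := by
    rw [ENNReal.ofReal_prod_of_nonneg (fun i _ => by have := h2 i; positivity)]
    simp only [chainW, Set.indicator, Set.mem_ofPred_eq, h1, if_true, gevW, h2]
  rw [hW, ← ENNReal.ofReal_mul
    (Finset.prod_nonneg fun i _ => by have := h2 i; positivity)]
  congr 1
  unfold gevrDensity
  rw [dif_pos ⟨Nat.succ_pos m, h1, h2⟩, Finset.prod_mul_distrib, Finset.prod_const,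
    Finset.card_univ, Fintype.card_fin, inv_pow, mul_assoc, sub_eq_add_neg, Real.exp_add,
    mul_comm (Real.exp _)]
  congr 2
  rw [Finset.mul_sum, ← Finset.sum_neg_distrib, Real.exp_sum]
  refine Finset.prod_congr rfl fun i _ => ?_
  rw [Real.rpow_def_of_pos (h2 i)]
  congr 1
  unfold gevBase
  ring

/-- under the GEV_r distribution, `E[(1+ξZ_j)^{−2/ξ}] = j(j+1)`
for every `1 ≤ j ≤ r`; in particular the expectation is finite. -/
theorem gevr_second_moment_exp_transform
    (μ σ ξ : ℝ) (hσ : 0 < σ) (hξ : ξ ≠ 0) (r : ℕ) (hr : 1 ≤ r)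
    (j : ℕ) (hj1 : 1 ≤ j) (hjr : j ≤ r) :
    MeasureTheory.Integrable
      (fun x : Fin r → ℝ =>
        (1 + ξ * ((x ⟨j - 1, by omega⟩ - μ) / σ)) ^ (-2 / ξ))
      (gevrMeasure μ σ ξ r) ∧
    ∫ x : Fin r → ℝ,
        (1 + ξ * ((x ⟨j - 1, by omega⟩ - μ) / σ)) ^ (-2 / ξ)
        ∂(gevrMeasure μ σ ξ r)
      = (j : ℝ) * ((j : ℝ) + 1) := by
  obtain ⟨n, rfl⟩ : ∃ n, j = n + 1 := ⟨j - 1, by omega⟩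
  obtain ⟨d, rfl⟩ : ∃ d, r = n + d + 1 := ⟨r - (n + 1), by omega⟩
  set X : (Fin (n + d + 1) → ℝ) → ℝ := fun x =>
    (1 + ξ * ((x ⟨n + 1 - 1, by omega⟩ - μ) / σ)) ^ (-2 / ξ) with hX
  have hXm : Measurable X :=
    ((measurable_gevBase μ σ ξ).comp (measurable_pi_apply _)).pow_const _
  have h0 : ∀ t, t ∉ {t | 0 < gevBase μ σ ξ t} → gevW μ σ ξ t = 0 :=
    fun t ht => Set.indicator_of_notMem ht _
  have hdm : Measurable fun x : Fin (n + d + 1) → ℝ =>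
      ENNReal.ofReal (gevrDensity μ σ ξ (n + d + 1) x) := by
    simp_rw [gevrDensity_eq_s7 μ σ ξ hσ]
    have := measurable_gevU μ σ ξ
    exact (measurable_chainW (measurable_gevW μ σ ξ) _).mul (by fun_prop)
  have hbase : ∀ x : Fin (n + d + 1) → ℝ, chainW (gevW μ σ ξ) x ≠ 0 → ∀ i,
      0 < gevBase μ σ ξ (x i) := fun x hx i => chainW_ne_zero h0 hx i
  have hXsq : ∀ x : Fin (n + d + 1) → ℝ, chainW (gevW μ σ ξ) x ≠ 0 →
      X x = gevU μ σ ξ (x ⟨n, by omega⟩) ^ 2 := by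
    intro x hx
    have hb := hbase x hx ⟨n, by omega⟩
    unfold gevU
    rw [← Real.rpow_natCast, ← Real.rpow_mul hb.le]
    have : -1 / ξ * ((2 : ℕ) : ℝ) = -2 / ξ := by push_cast; ring
    rw [this]
    rfl
  have hnn : 0 ≤ᵐ[gevrMeasure μ σ ξ (n + d + 1)] X := by
    unfold gevrMeasure
    refine (ae_withDensity_iff hdm).2 (ae_of_all _ fun x hx => ?_)
    rw [gevrDensity_eq_s7 μ σ ξ hσ] at hx
    rw [hXsq x (left_ne_zero_of_mul hx)]
    exact sq_nonneg _
  have hval : ∫⁻ x, ENNReal.ofReal (X x) ∂(gevrMeasure μ σ ξ (n + d + 1))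
      = ENNReal.ofReal (((n : ℝ) + 1) * (n + 2)) := by
    unfold gevrMeasure
    rw [lintegral_withDensity_eq_lintegral_mul _ hdm hXm.ennreal_ofReal, ← gamma_value n,
      ← chain_mid (measurable_gevW μ σ ξ) (measurable_gevU μ σ ξ) h0 (gev_cov μ σ ξ hσ hξ)
        (gevU_anti μ σ ξ hσ hξ) (fun t ht => Real.rpow_pos_of_pos ht _) n
        (fun u => ENNReal.ofReal (u ^ 2)) (by fun_prop) d]
    refine lintegral_congr fun x => ?_
    rw [Pi.mul_apply, gevrDensity_eq_s7 μ σ ξ hσ]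
    by_cases hx : chainW (gevW μ σ ξ) x = 0
    · simp [hx]
    · rw [hXsq x hx]; ring
  constructor
  · refine ⟨hXm.aestronglyMeasurable, ?_⟩
    rw [hasFiniteIntegral_iff_ofReal hnn, hval]
    exact ENNReal.ofReal_lt_top
  · rw [integral_eq_lintegral_of_nonneg_ae hnn hXm.aestronglyMeasurable, hval,
      ENNReal.toReal_ofReal (by positivity)]
    push_cast
    ring
end

section
/- For every μ ∈ ℝ, σ > 0, ξ ≠ 0, and integer r ≥ 1, the GEV_r density f_r is a probability density: f_r ≥ 0 and its Lebesgue integral over ℝ^r (equivalently, over the region D_r) equals 1. -/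
open MeasureTheory ProbabilityTheory Real Filter Topology

noncomputable section

/-- the base `1 + ξ z` -/
def gU (μ σ ξ x : ℝ) : ℝ := 1 + ξ * ((x - μ) / σ)

/-- `(1+ξ z)^(-1/ξ)` -/
def gW (μ σ ξ x : ℝ) : ℝ := (gU μ σ ξ x) ^ (-1 / ξ)

/-- minus the derivative of `gW` -/
def gG (μ σ ξ x : ℝ) : ℝ := σ⁻¹ * Real.exp (-((1 / ξ + 1) * Real.log (gU μ σ ξ x)))

theorem gU_meas (μ σ ξ : ℝ) : Measurable (gU μ σ ξ) := by
  unfold gU; fun_prop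

theorem gW_meas (μ σ ξ : ℝ) : Measurable (gW μ σ ξ) := by
  unfold gW; exact (gU_meas μ σ ξ).pow_const _

theorem gG_meas (μ σ ξ : ℝ) : Measurable (gG μ σ ξ) := by
  unfold gG
  have := gU_meas μ σ ξ
  fun_prop

theorem gG_nonneg (μ σ ξ : ℝ) (hσ : 0 < σ) (x : ℝ) : 0 ≤ gG μ σ ξ x := by
  unfold gG; positivity

theorem gW_deriv (μ σ ξ : ℝ) (hξ : ξ ≠ 0) (x : ℝ) (hx : 0 < gU μ σ ξ x) :
    HasDerivAt (gW μ σ ξ) (-gG μ σ ξ x) x := by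
  have h1 : HasDerivAt (gU μ σ ξ) (ξ * (1 / σ)) x := by
    unfold gU
    exact ((((hasDerivAt_id x).sub_const μ).div_const σ).const_mul ξ).const_add 1
  have h2 := h1.rpow_const (p := -1 / ξ) (Or.inl hx.ne')
  have e : ξ * (1 / σ) * (-1 / ξ) * gU μ σ ξ x ^ (-1 / ξ - 1) = -gG μ σ ξ x := by
    unfold gG
    rw [Real.rpow_def_of_pos hx,
      show Real.log (gU μ σ ξ x) * (-1 / ξ - 1) = -((1 / ξ + 1) * Real.log (gU μ σ ξ x)) by ring]
    field_simp
  rw [e] at h2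
  exact h2

theorem gW_lt (μ σ ξ : ℝ) (hσ : 0 < σ) (hξ : ξ ≠ 0) (x y : ℝ) (hx : 0 < gU μ σ ξ x)
    (hy : 0 < gU μ σ ξ y) (h : x < y) : gW μ σ ξ y < gW μ σ ξ x := by
  have hz : (x - μ) / σ < (y - μ) / σ := by gcongr
  unfold gW
  rcases lt_or_gt_of_ne hξ with h0 | h0
  · apply Real.rpow_lt_rpow hy.le
    · unfold gU; nlinarith
    · exact div_pos_of_neg_of_neg (by norm_num) h0
  · apply Real.rpow_lt_rpow_of_neg hx
    · unfold gU; nlinarith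
    · exact div_neg_of_neg_of_pos (by norm_num) h0

theorem gW_lt_iff (μ σ ξ : ℝ) (hσ : 0 < σ) (hξ : ξ ≠ 0) (x y : ℝ) (hx : 0 < gU μ σ ξ x)
    (hy : 0 < gU μ σ ξ y) : gW μ σ ξ y < gW μ σ ξ x ↔ x < y := by
  refine ⟨fun h => ?_, gW_lt μ σ ξ hσ hξ x y hx hy⟩
  by_contra hc
  rcases (not_lt.mp hc).lt_or_eq with h1 | h1
  · exact absurd (gW_lt μ σ ξ hσ hξ y x hy hx h1) (not_lt.mpr h.le)
  · subst h1; exact lt_irrefl _ h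

theorem gW_lint (μ σ ξ : ℝ) (hσ : 0 < σ) (hξ : ξ ≠ 0) (b : ℝ) (hb : 0 ≤ b) :
    ∫⁻ x in {x | 0 < gU μ σ ξ x ∧ b < gW μ σ ξ x},
      ENNReal.ofReal (gG μ σ ξ x * Real.exp (-gW μ σ ξ x)) = ENNReal.ofReal (Real.exp (-b)) := by
  set s := {x | 0 < gU μ σ ξ x ∧ b < gW μ σ ξ x} with hs
  have ms : MeasurableSet s :=
    (measurableSet_lt measurable_const (gU_meas μ σ ξ)).inter
      (measurableSet_lt measurable_const (gW_meas μ σ ξ))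
  have inj : Set.InjOn (gW μ σ ξ) s := by
    intro x hx y hy h
    by_contra hne
    rcases lt_or_gt_of_ne hne with h1 | h1
    · exact (gW_lt μ σ ξ hσ hξ x y hx.1 hy.1 h1).ne h.symm
    · exact (gW_lt μ σ ξ hσ hξ y x hy.1 hx.1 h1).ne h
  have key := lintegral_image_eq_lintegral_abs_deriv_mul ms
    (fun x hx => (gW_deriv μ σ ξ hξ x hx.1).hasDerivWithinAt) inj
    (fun t => ENNReal.ofReal (Real.exp (-t)))
  have im : gW μ σ ξ '' s = Set.Ioi b := by
    ext t
    constructor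
    · rintro ⟨x, hx, rfl⟩; exact hx.2
    · intro ht
      have ht0 : 0 < t := lt_of_le_of_lt hb ht
      have hu : gU μ σ ξ (μ + σ * ((t ^ (-ξ) - 1) / ξ)) = t ^ (-ξ) := by
        unfold gU; field_simp; ring
      have hw : gW μ σ ξ (μ + σ * ((t ^ (-ξ) - 1) / ξ)) = t := by
        unfold gW
        rw [hu, ← Real.rpow_mul ht0.le, show -ξ * (-1 / ξ) = 1 by field_simp, Real.rpow_one]
      refine ⟨_, ⟨?_, ?_⟩, hw⟩
      · rw [hu]; positivity
      · rw [hw]; exact ht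
  rw [im] at key
  have e : ∫⁻ t in Set.Ioi b, ENNReal.ofReal (Real.exp (-t)) = ENNReal.ofReal (Real.exp (-b)) := by
    rw [← ofReal_integral_eq_lintegral_ofReal (integrableOn_exp_neg_Ioi b)
      (ae_of_all _ fun t => (Real.exp_pos _).le), integral_exp_neg_Ioi]
  rw [← e, key]
  refine lintegral_congr fun x => ?_
  rw [abs_neg, abs_of_nonneg (gG_nonneg μ σ ξ hσ x), ENNReal.ofReal_mul (gG_nonneg μ σ ξ hσ x)]

/-- the support -/
def gD (μ σ ξ : ℝ) (n : ℕ) : Set (Fin (n + 1) → ℝ) :=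
  {x | StrictAnti x ∧ ∀ j, 0 < gU μ σ ξ (x j)}

/-- the density with values in `ℝ≥0∞` -/
def gF (μ σ ξ : ℝ) (n : ℕ) : (Fin (n + 1) → ℝ) → ENNReal :=
  (gD μ σ ξ n).indicator fun x =>
    ENNReal.ofReal ((∏ j, gG μ σ ξ (x j)) * Real.exp (-gW μ σ ξ (x (Fin.last n))))

theorem gD_meas (μ σ ξ : ℝ) (n : ℕ) : MeasurableSet (gD μ σ ξ n) := by
  have e : gD μ σ ξ n = (⋂ i, ⋂ j, {x : Fin (n + 1) → ℝ | i < j → x j < x i}) ∩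
      ⋂ j, {x | 0 < gU μ σ ξ (x j)} := by
    ext x
    simp [gD, StrictAnti]
  rw [e]
  refine MeasurableSet.inter (MeasurableSet.iInter fun i => MeasurableSet.iInter fun j => ?_)
    (MeasurableSet.iInter fun j => ?_)
  · by_cases h : i < j
    · simp only [h, true_imp_iff]
      exact measurableSet_lt (measurable_pi_apply j) (measurable_pi_apply i)
    · simp [h]
  · exact measurableSet_lt measurable_const ((gU_meas μ σ ξ).comp (measurable_pi_apply j))

theorem gF_meas (μ σ ξ : ℝ) (n : ℕ) : Measurable (gF μ σ ξ n) := by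
  refine Measurable.indicator ?_ (gD_meas μ σ ξ n)
  have h1 := gW_meas μ σ ξ
  have h2 := gG_meas μ σ ξ
  fun_prop

theorem gF_eq (μ σ ξ : ℝ) (n : ℕ) (x : Fin (n + 1) → ℝ) :
    ENNReal.ofReal (gevrDensity μ σ ξ (n + 1) x) = gF μ σ ξ n x := by
  unfold gF gevrDensity
  by_cases h : x ∈ gD μ σ ξ n
  · rw [Set.indicator_of_mem h, dif_pos ⟨Nat.succ_pos n, h.1, h.2⟩]
    congr 1
    have e : (⟨n + 1 - 1, Nat.sub_lt (Nat.succ_pos n) Nat.one_pos⟩ : Fin (n + 1)) = Fin.last n := by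
      ext; simp
    rw [e]
    unfold gG
    rw [Finset.prod_mul_distrib, ← Real.exp_sum, mul_assoc, ← Real.exp_add]
    simp only [Finset.prod_const, Finset.card_univ, Fintype.card_fin, inv_pow,
      Finset.sum_neg_distrib, ← Finset.mul_sum, gW, gU]
    congr 2
    ring
  · rw [Set.indicator_of_notMem h, dif_neg (fun h' => h ⟨h'.2.1, h'.2.2⟩), ENNReal.ofReal_zero]

theorem gD_snoc (μ σ ξ : ℝ) (n : ℕ) (y : Fin (n + 1) → ℝ) (t : ℝ) :
    (Fin.snoc y t : Fin (n + 2) → ℝ) ∈ gD μ σ ξ (n + 1) ↔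
      y ∈ gD μ σ ξ n ∧ 0 < gU μ σ ξ t ∧ t < y (Fin.last n) := by
  simp only [gD, Set.mem_ofPred_eq, Fin.forall_fin_succ' (n := n + 1), Fin.snoc_castSucc, Fin.snoc_last]
  constructor
  · rintro ⟨h1, h2, h3⟩
    refine ⟨⟨fun i j hij => ?_, h2⟩, h3, ?_⟩
    · simpa using h1 (Fin.castSucc_lt_castSucc_iff.mpr hij)
    · simpa using h1 (Fin.castSucc_lt_last (Fin.last n))
  · rintro ⟨⟨h1, h2⟩, h3, h4⟩
    refine ⟨?_, h2, h3⟩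
    intro i j hij
    induction j using Fin.lastCases with
    | last =>
      induction i using Fin.lastCases with
      | last => exact absurd hij (lt_irrefl _)
      | cast i =>
        simp only [Fin.snoc_castSucc, Fin.snoc_last]
        exact lt_of_lt_of_le h4 (h1.antitone (Fin.le_last i))
    | cast j =>
      induction i using Fin.lastCases with
      | last => exact absurd hij (not_lt.mpr (Fin.le_last _))
      | cast i =>
        simp only [Fin.snoc_castSucc]
        exact h1 (Fin.castSucc_lt_castSucc_iff.mp hij)

theorem gF_step (μ σ ξ : ℝ) (hσ : 0 < σ) (hξ : ξ ≠ 0) (n : ℕ) (y : Fin (n + 1) → ℝ) :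
    ∫⁻ t, gF μ σ ξ (n + 1) (Fin.snoc y t : Fin (n + 2) → ℝ) = gF μ σ ξ n y := by
  by_cases hy : y ∈ gD μ σ ξ n
  · have hl := hy.2 (Fin.last n)
    set b := gW μ σ ξ (y (Fin.last n)) with hb
    have hb0 : 0 ≤ b := Real.rpow_nonneg hl.le _
    have ms : MeasurableSet {x | 0 < gU μ σ ξ x ∧ b < gW μ σ ξ x} :=
      (measurableSet_lt measurable_const (gU_meas μ σ ξ)).inter
        (measurableSet_lt measurable_const (gW_meas μ σ ξ))
    have hP : 0 ≤ ∏ j, gG μ σ ξ (y j) := Finset.prod_nonneg fun j _ => gG_nonneg μ σ ξ hσ _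
    have e : ∀ t, gF μ σ ξ (n + 1) (Fin.snoc y t : Fin (n + 2) → ℝ) =
        ENNReal.ofReal (∏ j, gG μ σ ξ (y j)) *
        ({x | 0 < gU μ σ ξ x ∧ b < gW μ σ ξ x}.indicator
          (fun x => ENNReal.ofReal (gG μ σ ξ x * Real.exp (-gW μ σ ξ x))) t) := by
      intro t
      unfold gF
      by_cases ht : 0 < gU μ σ ξ t ∧ t < y (Fin.last n)
      · rw [Set.indicator_of_mem ((gD_snoc μ σ ξ n y t).mpr ⟨hy, ht⟩),
          Set.indicator_of_mem (by exact ⟨ht.1, gW_lt μ σ ξ hσ hξ _ _ ht.1 hl ht.2⟩),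
          Fin.prod_univ_castSucc, ← ENNReal.ofReal_mul hP]
        simp only [Fin.snoc_castSucc, Fin.snoc_last, mul_assoc]
      · rw [Set.indicator_of_notMem (fun h => ht ((gD_snoc μ σ ξ n y t).mp h).2),
          Set.indicator_of_notMem, mul_zero]
        intro h
        exact ht ⟨h.1, (gW_lt_iff μ σ ξ hσ hξ _ _ h.1 hl).mp h.2⟩
    simp_rw [e]
    rw [lintegral_const_mul' _ _ ENNReal.ofReal_ne_top, lintegral_indicator ms,
      gW_lint μ σ ξ hσ hξ b hb0, ← ENNReal.ofReal_mul hP]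
    unfold gF
    rw [Set.indicator_of_mem hy]
  · have e : ∀ t, gF μ σ ξ (n + 1) (Fin.snoc y t : Fin (n + 2) → ℝ) = 0 := fun t =>
      Set.indicator_of_notMem (fun h => hy ((gD_snoc μ σ ξ n y t).mp h).1) _
    simp_rw [e]
    unfold gF
    rw [Set.indicator_of_notMem hy, lintegral_zero]

theorem gF_lint (μ σ ξ : ℝ) (hσ : 0 < σ) (hξ : ξ ≠ 0) (n : ℕ) :
    ∫⁻ x, gF μ σ ξ n x = 1 := by
  induction n with
  | zero =>
    have mp := (volume_preserving_funUnique (Fin 1) ℝ).symm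
    refine (mp.lintegral_comp (gF_meas μ σ ξ 0)).symm.trans ?_
    have ms : MeasurableSet {x | 0 < gU μ σ ξ x ∧ 0 < gW μ σ ξ x} :=
      (measurableSet_lt measurable_const (gU_meas μ σ ξ)).inter
        (measurableSet_lt measurable_const (gW_meas μ σ ξ))
    have h := gW_lint μ σ ξ hσ hξ 0 le_rfl
    rw [← lintegral_indicator ms, neg_zero, Real.exp_zero, ENNReal.ofReal_one] at h
    rw [← h]
    refine lintegral_congr fun t => ?_
    have e : (MeasurableEquiv.funUnique (Fin 1) ℝ).symm t = fun _ => t := rfl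
    rw [e]
    unfold gF
    by_cases ht : 0 < gU μ σ ξ t
    · rw [Set.indicator_of_mem, Set.indicator_of_mem]
      · simp
      · exact ⟨ht, Real.rpow_pos_of_pos ht _⟩
      · exact ⟨fun i j hij => absurd hij (by omega), fun _ => ht⟩
    · rw [Set.indicator_of_notMem, Set.indicator_of_notMem]
      · exact fun h => ht h.1
      · exact fun h => ht (h.2 0)
  | succ n ih =>
    have mp := (volume_preserving_piFinSuccAbove (fun _ : Fin (n + 2) => ℝ) (Fin.last (n + 1))).symm
    refine (mp.lintegral_comp (gF_meas μ σ ξ (n + 1))).symm.trans ?_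
    refine (lintegral_prod_symm _
      ((gF_meas μ σ ξ (n + 1)).comp mp.measurable).aemeasurable).trans ?_
    rw [← ih]
    refine lintegral_congr fun y => ?_
    rw [← gF_step μ σ ξ hσ hξ n y]
    refine lintegral_congr fun t => ?_
    exact congrArg (gF μ σ ξ (n + 1)) (Fin.insertNth_last' t y)

end

/-- `f_r` is a probability density: it is nonnegative and its
Lebesgue integral over `ℝ^r` equals `1`. -/
theorem gevrDensity_isProbabilityDensity
    (μ σ ξ : ℝ) (hσ : 0 < σ) (hξ : ξ ≠ 0) (r : ℕ) (hr : 1 ≤ r) :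
    (∀ x : Fin r → ℝ, 0 ≤ gevrDensity μ σ ξ r x) ∧
    ∫ x : Fin r → ℝ, gevrDensity μ σ ξ r x = 1 := by
  have nn : ∀ x : Fin r → ℝ, 0 ≤ gevrDensity μ σ ξ r x := by
    intro x
    unfold gevrDensity
    split_ifs
    · positivity
    · exact le_rfl
  refine ⟨nn, ?_⟩
  obtain ⟨n, rfl⟩ : ∃ n, r = n + 1 := ⟨r - 1, by omega⟩
  have e : gevrDensity μ σ ξ (n + 1) = fun x => (gF μ σ ξ n x).toReal := by
    funext x
    rw [← gF_eq, ENNReal.toReal_ofReal (nn x)]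
  have m : Measurable (gevrDensity μ σ ξ (n + 1)) := by
    rw [e]; exact (gF_meas μ σ ξ n).ennreal_toReal
  rw [integral_eq_lintegral_of_nonneg_ae (ae_of_all _ nn) m.aestronglyMeasurable]
  simp_rw [gF_eq]
  rw [gF_lint μ σ ξ hσ hξ n, ENNReal.toReal_one]
end
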